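/- Let A be the infinitesimal generator of a C₀-semigroup (T(t))_{t≥0} on a complex Banach space X with ‖T(t)‖ ≤ M for all t ≥ 0, where M ≥ 1. Suppose there exists a constant C ≥ 1 such that is ∈ ρ(A) for all real s ≠ 0 and ‖R(is,A)‖ ≤ C/|s|. Then there exist universal constants c₁, c₂ > 0 such that A generates a bounded holomorphic semigroup extending (T(t)) on the sector {z ∈ ℂ∖{0} : |arg z| ≤ c₁/(CM)}, and on this sector ‖T(z)‖ ≤ c₂ · CM · (1 + log(CM)). -/

import Mathlib

open Filter Topology

universe u

/-- A strongly continuous one-parameter semigroup of bounded operators on a complex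
Banach space. -/
def IsC0Semigroup {X : Type u} [NormedAddCommGroup X] [NormedSpace ℂ X]
    (T : ℝ → X →L[ℂ] X) : Prop :=
  T 0 = 1 ∧ (∀ s t : ℝ, 0 ≤ s → 0 ≤ t → T (s + t) = (T s).comp (T t)) ∧
    ∀ x : X, Tendsto (fun t => T t x) (nhdsWithin 0 (Set.Ioi 0)) (nhds x)

/-- `A` (with domain `dom`) is the infinitesimal generator of the semigroup `T`. -/
def IsGenerator {X : Type u} [NormedAddCommGroup X] [NormedSpace ℂ X]
    (T : ℝ → X →L[ℂ] X) (dom : Set X) (A : X → X) : Prop :=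
  (∀ x : X, x ∈ dom ↔ ∃ y : X,
      Tendsto (fun h : ℝ => (h : ℂ)⁻¹ • (T h x - x)) (nhdsWithin 0 (Set.Ioi 0)) (nhds y)) ∧
    ∀ x ∈ dom,
      Tendsto (fun h : ℝ => (h : ℂ)⁻¹ • (T h x - x)) (nhdsWithin 0 (Set.Ioi 0)) (nhds (A x))

/-- `R` is the resolvent of `A` (with domain `dom`) at `lam`. -/
def IsResolventAt {X : Type u} [NormedAddCommGroup X] [NormedSpace ℂ X]
    (dom : Set X) (A : X → X) (lam : ℂ) (R : X →L[ℂ] X) : Prop :=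
  (∀ y : X, R y ∈ dom) ∧ (∀ y : X, lam • R y - A (R y) = y) ∧
    ∀ x ∈ dom, R (lam • x - A x) = x

/-!
Near the imaginary axis the bound `C / |s|` and a Neumann series extend the resolvent `G` of `A`
from the right half-plane to the sector `-2C Re l < |Im l|`. Between the vertical line `Re l = ε`
and the two rays that leave `ε` in the directions `-1/(4C) ± i`, this gives `‖G l‖ ≤ 2M / ε` and
`‖G l‖ ≤ 2CM / |Im l|`. Hence the derivative `-G²` decays quadratically, so Laplace inversion on
the line converges absolutely and recovers `-t • T t`. Cauchy's theorem moves the line to the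
slanted rays, and integration by parts replaces `-G²` by `-t • G`. The resulting contour integral
of `exp (l * z) • G l` still converges, and is holomorphic, for complex `z` with
`4C |Im z| < Re z`. By the identity theorem it inherits the semigroup law and does not depend on
`ε`; taking `ε = 1 / Re z` bounds it by a multiple of `C * M`.
-/

namespace IsResolventAt

variable {X : Type u} [NormedAddCommGroup X] [NormedSpace ℂ X] {dom : Set X} {A : X → X}
  {l m : ℂ} {P Q : X →L[ℂ] X}

theorem sub_eq (hP : IsResolventAt dom A l P) (hQ : IsResolventAt dom A m Q) :
    P - Q = (m - l) • (P * Q) := by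
  ext y
  have hsplit : m • Q y - A (Q y) = (l • Q y - A (Q y)) + (m - l) • Q y := by module
  have hPy : P y = Q y + (m - l) • P (Q y) := by
    conv_lhs => rw [← hQ.2.1 y, hsplit, map_add, hP.2.2 _ (hQ.1 y), map_smul]
  simp only [sub_apply, smul_apply, mul_apply_eq_comp, hPy, add_sub_cancel_left]

theorem unique (hP : IsResolventAt dom A l P) (hQ : IsResolventAt dom A l Q) : P = Q := by
  simpa [sub_eq_zero] using hP.sub_eq hQ

theorem norm_le_two_mul (hP : IsResolventAt dom A l P) (hQ : IsResolventAt dom A m Q)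
    (h : ‖l - m‖ * ‖Q‖ ≤ 1 / 2) : ‖P‖ ≤ 2 * ‖Q‖ := by
  have hPQ : ‖P - Q‖ ≤ ‖P‖ * (1 / 2) := calc
    ‖P - Q‖ ≤ ‖l - m‖ * (‖P‖ * ‖Q‖) := by
      rw [hP.sub_eq hQ, norm_smul, norm_sub_rev m l]
      gcongr
      exact norm_mul_le P Q
    _ = ‖P‖ * (‖l - m‖ * ‖Q‖) := by ring
    _ ≤ ‖P‖ * (1 / 2) := by gcongr
  linarith [norm_sub_norm_le P Q]

theorem exists_add [CompleteSpace X] (hQ : IsResolventAt dom A l Q) {d : ℂ}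
    (hd : ‖d‖ * ‖Q‖ < 1) : ∃ R, IsResolventAt dom A (l + d) R := by
  have hlt : ‖-(d • Q)‖ < 1 := by rwa [norm_neg, norm_smul]
  set U := Units.oneSub (-(d • Q)) hlt with hU
  have hU_val : (U : X →L[ℂ] X) = 1 + d • Q := by simp [hU]
  have hcomm : Commute Q (U : X →L[ℂ] X) := by
    rw [hU_val]
    exact (Commute.one_right Q).add_right ((Commute.refl Q).smul_right d)
  refine ⟨Q * ↑U⁻¹, fun y ↦ hQ.1 _, fun y ↦ ?_, fun x hx ↦ ?_⟩
  · have hUy : (1 + d • Q) ((↑U⁻¹ : X →L[ℂ] X) y) = y := by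
      rw [← hU_val, ← mul_apply_eq_comp, U.mul_inv, one_apply_eq_self]
    calc (l + d) • Q ((↑U⁻¹ : X →L[ℂ] X) y) - A (Q ((↑U⁻¹ : X →L[ℂ] X) y))
        = (l • Q ((↑U⁻¹ : X →L[ℂ] X) y) - A (Q ((↑U⁻¹ : X →L[ℂ] X) y)))
            + d • Q ((↑U⁻¹ : X →L[ℂ] X) y) := by module
      _ = y := by rw [hQ.2.1]; exact hUy
  · have hQx : Q ((l + d) • x - A x) = (U : X →L[ℂ] X) x := by
      have hsplit : (l + d) • x - A x = (l • x - A x) + d • x := by module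
      rw [hsplit, map_add, hQ.2.2 x hx, map_smul, hU_val]
      rfl
    rw [hcomm.units_inv_right.eq, mul_apply_eq_comp, hQx, ← mul_apply_eq_comp, U.inv_mul,
      one_apply_eq_self]

theorem hasDerivAt {G : ℂ → X →L[ℂ] X} (hG : ∀ᶠ m in 𝓝 l, IsResolventAt dom A m (G m)) :
    HasDerivAt G (-(G l * G l)) l := by
  have hl : IsResolventAt dom A l (G l) := hG.self_of_nhds
  have hdist (a : ℝ) : Tendsto (fun m ↦ ‖m - l‖ * a) (𝓝 l) (𝓝 0) := by
    have hcont : Continuous fun m ↦ ‖m - l‖ * a := by fun_prop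
    simpa using hcont.tendsto l
  have hcont : Tendsto G (𝓝 l) (𝓝 (G l)) := by
    rw [tendsto_iff_norm_sub_tendsto_zero]
    refine squeeze_zero' (Eventually.of_forall fun _ ↦ norm_nonneg _) ?_
      (hdist (2 * ‖G l‖ * ‖G l‖))
    filter_upwards [hG, (hdist ‖G l‖).eventually_le_const one_half_pos] with m hm hsmall
    rw [hm.sub_eq hl, norm_smul, norm_sub_rev]
    gcongr
    exact (norm_mul_le _ _).trans (by gcongr; exact hm.norm_le_two_mul hl hsmall)
  rw [hasDerivAt_iff_tendsto_slope]
  refine ((hcont.mul_const (G l)).neg.mono_left nhdsWithin_le_nhds).congr' ?_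
  filter_upwards [nhdsWithin_le_nhds hG, self_mem_nhdsWithin] with m hm hne
  have hne' : m - l ≠ 0 := sub_ne_zero.mpr hne
  rw [slope_def_module, hm.sub_eq hl, ← neg_sub m l, neg_smul, smul_neg,
    inv_smul_smul₀ hne']

end IsResolventAt

section Laplace

open MeasureTheory Set

theorem integral_Ioi_comp_add_left {E : Type*} [NormedAddCommGroup E] [NormedSpace ℝ E]
    (g : ℝ → E) (h : ℝ) : ∫ τ in Ioi 0, g (h + τ) = ∫ τ in Ioi h, g τ := by
  rw [← (measurePreserving_add_left volume h).setIntegral_preimage_emb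
    (MeasurableEquiv.addLeft h).measurableEmbedding g (Ioi h)]
  simp

variable {X : Type u} [NormedAddCommGroup X] [NormedSpace ℂ X]

/-- The Laplace transform `∫₀^∞ e^{-lτ} f τ dτ` of a vector-valued function; the values of `f` on
`(-∞, 0]` are ignored. -/
noncomputable def laplaceTransform (f : ℝ → X) (l : ℂ) : X :=
  ∫ τ in Ioi (0 : ℝ), Complex.exp (-(l * τ)) • f τ

variable {f : ℝ → X} {B : ℝ} {l : ℂ}

theorem norm_laplace_integrand_le (hB : ∀ τ, 0 < τ → ‖f τ‖ ≤ B) {τ : ℝ} (hτ : 0 < τ) :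
    ‖Complex.exp (-(l * τ)) • f τ‖ ≤ Real.exp (-l.re * τ) * B := by
  rw [norm_smul, Complex.norm_exp]
  simpa using mul_le_mul_of_nonneg_left (hB τ hτ) (Real.exp_nonneg (-(l.re * τ)))

theorem integrableOn_laplace_integrand (hf : ContinuousOn f (Ioi 0))
    (hB : ∀ τ, 0 < τ → ‖f τ‖ ≤ B) (hl : 0 < l.re) :
    IntegrableOn (fun τ : ℝ ↦ Complex.exp (-(l * τ)) • f τ) (Ioi 0) := by
  refine ((exp_neg_integrableOn_Ioi 0 hl).mul_const B).mono' ?_ ?_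
  · exact ContinuousOn.aestronglyMeasurable (ContinuousOn.smul (by fun_prop) hf) measurableSet_Ioi
  · exact (ae_restrict_mem measurableSet_Ioi).mono fun τ hτ ↦ norm_laplace_integrand_le hB hτ

theorem norm_laplaceTransform_le (hB : ∀ τ, 0 < τ → ‖f τ‖ ≤ B) (hl : 0 < l.re) :
    ‖laplaceTransform f l‖ ≤ B / l.re := calc
  ‖laplaceTransform f l‖ ≤ ∫ τ in Ioi (0 : ℝ), Real.exp (-l.re * τ) * B :=
    norm_integral_le_of_norm_le ((exp_neg_integrableOn_Ioi 0 hl).mul_const B)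
      ((ae_restrict_mem measurableSet_Ioi).mono fun τ hτ ↦ norm_laplace_integrand_le hB hτ)
  _ = B / l.re := by
    rw [integral_mul_const, integral_exp_mul_Ioi (by linarith)]
    simp [div_eq_inv_mul]

end Laplace

section Semigroup

open MeasureTheory Set

variable {X : Type u} [NormedAddCommGroup X] [NormedSpace ℂ X] {T : ℝ → X →L[ℂ] X} {M : ℝ}

theorem norm_apply_le_mul_norm (hM : ∀ t, 0 ≤ t → ‖T t‖ ≤ M) (x : X) (τ : ℝ) (hτ : 0 < τ) :
    ‖T τ x‖ ≤ M * ‖x‖ :=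
  (T τ).le_of_opNorm_le (hM τ hτ.le) x

namespace IsC0Semigroup

theorem zero_apply (hT : IsC0Semigroup T) (x : X) : T 0 x = x := by simp [hT.1]

theorem add_apply (hT : IsC0Semigroup T) {s t : ℝ} (hs : 0 ≤ s) (ht : 0 ≤ t) (x : X) :
    T (s + t) x = T s (T t x) := by simp [hT.2.1 s t hs ht]

theorem norm_apply_sub_apply_le (hT : IsC0Semigroup T) (hM : ∀ t, 0 ≤ t → ‖T t‖ ≤ M)
    {s t : ℝ} (hs : 0 ≤ s) (ht : 0 ≤ t) (x : X) :
    ‖T t x - T s x‖ ≤ M * ‖T |t - s| x - x‖ := by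
  wlog hst : s ≤ t generalizing s t
  · rw [norm_sub_rev, abs_sub_comm]
    exact this ht hs (le_of_not_ge hst)
  rw [abs_of_nonneg (sub_nonneg.mpr hst)]
  nth_rewrite 1 [← add_sub_cancel s t]
  rw [hT.add_apply hs (sub_nonneg.mpr hst), ← map_sub]
  exact (T s).le_of_opNorm_le (hM s hs) _

theorem continuousOn_apply (hT : IsC0Semigroup T) (hM : ∀ t, 0 ≤ t → ‖T t‖ ≤ M) (x : X) :
    ContinuousOn (fun t ↦ T t x) (Ici 0) := by
  have hright : ContinuousWithinAt (fun t ↦ T t x) (Ici 0) 0 := by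
    rw [← Ioi_insert, continuousWithinAt_insert_self, ContinuousWithinAt, hT.zero_apply]
    exact hT.2.2 x
  intro s hs
  have habs : Tendsto (fun t ↦ |t - s|) (𝓝[Ici 0] s) (𝓝[Ici 0] 0) := by
    refine tendsto_nhdsWithin_iff.mpr ⟨?_, Eventually.of_forall fun t ↦ mem_Ici.mpr (abs_nonneg _)⟩
    have hcont : Continuous fun t : ℝ ↦ |t - s| := by fun_prop
    simpa using (hcont.tendsto s).mono_left nhdsWithin_le_nhds
  rw [ContinuousWithinAt, tendsto_iff_norm_sub_tendsto_zero]
  refine squeeze_zero' (Eventually.of_forall fun _ ↦ norm_nonneg _)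
    (eventually_nhdsWithin_of_forall fun t ht ↦ hT.norm_apply_sub_apply_le hM hs ht x) ?_
  have hlim := (((hright.tendsto.comp habs).sub_const x).norm).const_mul M
  simpa [hT.zero_apply] using hlim

theorem tendsto_inv_smul_iff_hasDerivWithinAt (hT : IsC0Semigroup T) {x y : X} :
    Tendsto (fun h : ℝ ↦ (h : ℂ)⁻¹ • (T h x - x)) (𝓝[>] 0) (𝓝 y) ↔
      HasDerivWithinAt (fun h ↦ T h x) y (Ioi 0) 0 := by
  rw [hasDerivWithinAt_iff_tendsto_slope' self_notMem_Ioi]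
  refine tendsto_congr fun h ↦ ?_
  rw [slope_def_module, sub_zero, hT.zero_apply, ← Complex.ofReal_inv, Complex.coe_smul]

end IsC0Semigroup

namespace IsGenerator

variable {dom : Set X} {A : X → X}

theorem hasDerivWithinAt (hA : IsGenerator T dom A) (hT : IsC0Semigroup T) {x : X}
    (hx : x ∈ dom) : HasDerivWithinAt (fun h ↦ T h x) (A x) (Ioi 0) 0 :=
  hT.tendsto_inv_smul_iff_hasDerivWithinAt.mp (hA.2 x hx)

theorem mem_of_hasDerivWithinAt (hA : IsGenerator T dom A) (hT : IsC0Semigroup T) {x y : X}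
    (h : HasDerivWithinAt (fun h ↦ T h x) y (Ioi 0) 0) : x ∈ dom :=
  (hA.1 x).mpr ⟨y, hT.tendsto_inv_smul_iff_hasDerivWithinAt.mpr h⟩

theorem eq_of_hasDerivWithinAt (hA : IsGenerator T dom A) (hT : IsC0Semigroup T) {x y : X}
    (h : HasDerivWithinAt (fun h ↦ T h x) y (Ioi 0) 0) : A x = y :=
  (uniqueDiffWithinAt_Ioi 0).eq_deriv _
    (hA.hasDerivWithinAt hT (hA.mem_of_hasDerivWithinAt hT h)) h

end IsGenerator

namespace IsC0Semigroup

variable {l : ℂ}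

theorem integrableOn_laplace (hT : IsC0Semigroup T) (hM : ∀ t, 0 ≤ t → ‖T t‖ ≤ M) (x : X)
    (hl : 0 < l.re) : IntegrableOn (fun τ : ℝ ↦ Complex.exp (-(l * τ)) • T τ x) (Ioi 0) :=
  integrableOn_laplace_integrand ((hT.continuousOn_apply hM x).mono Ioi_subset_Ici_self)
    (norm_apply_le_mul_norm hM x) hl

theorem apply_laplaceTransform [CompleteSpace X] (hT : IsC0Semigroup T)
    (hM : ∀ t, 0 ≤ t → ‖T t‖ ≤ M) (x : X) (hl : 0 < l.re) {h : ℝ} (hh : 0 ≤ h) :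
    T h (laplaceTransform (T · x) l) = Complex.exp (l * h) •
      (laplaceTransform (T · x) l - ∫ τ in (0 : ℝ)..h, Complex.exp (-(l * τ)) • T τ x) := by
  have hint := hT.integrableOn_laplace hM x hl
  have htail : laplaceTransform (T · x) l - ∫ τ in (0 : ℝ)..h, Complex.exp (-(l * τ)) • T τ x
      = ∫ τ in Ioi h, Complex.exp (-(l * τ)) • T τ x := by
    rw [laplaceTransform, sub_eq_iff_eq_add', intervalIntegral.integral_interval_add_Ioi hint
      (hint.mono_set (Ioi_subset_Ioi hh))]
  rw [htail, ← integral_Ioi_comp_add_left, ← integral_smul, laplaceTransform,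
    ← ContinuousLinearMap.integral_comp_comm _ hint]
  refine setIntegral_congr_fun measurableSet_Ioi fun τ hτ ↦ ?_
  simp only [map_smul, smul_smul, ← Complex.exp_add]
  rw [hT.add_apply hh (le_of_lt hτ)]
  congr 2
  push_cast
  ring

theorem hasDerivWithinAt_laplaceTransform [CompleteSpace X] (hT : IsC0Semigroup T)
    (hM : ∀ t, 0 ≤ t → ‖T t‖ ≤ M) (x : X) (hl : 0 < l.re) :
    HasDerivWithinAt (fun h ↦ T h (laplaceTransform (T · x) l))
      (l • laplaceTransform (T · x) l - x) (Ioi 0) 0 := by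
  have hcont : ContinuousOn (fun τ : ℝ ↦ Complex.exp (-(l * τ)) • T τ x) (Ici 0) :=
    ContinuousOn.smul (by fun_prop) (hT.continuousOn_apply hM x)
  have hint : HasDerivWithinAt
      (fun h : ℝ ↦ ∫ τ in (0 : ℝ)..h, Complex.exp (-(l * τ)) • T τ x) x (Ici 0) 0 := by
    have := intervalIntegral.integral_hasDerivWithinAt_right (s := Ici 0) (t := Ioi 0)
      IntervalIntegrable.refl
      ⟨Ioi 0, self_mem_nhdsWithin, (hcont.mono Ioi_subset_Ici_self).aestronglyMeasurable
        measurableSet_Ioi⟩ ((hcont 0 self_mem_Ici).mono Ioi_subset_Ici_self)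
    simpa [hT.zero_apply] using this
  have hexp : HasDerivAt (fun h : ℝ ↦ Complex.exp (l * h)) l 0 := by
    simpa using ((hasDerivAt_id (0 : ℝ)).ofReal_comp.const_mul l).cexp
  have hprod := hexp.hasDerivWithinAt.smul ((hint.const_sub (laplaceTransform (T · x) l)).mono
    Ioi_subset_Ici_self)
  refine (hprod.congr (fun h hh ↦ hT.apply_laplaceTransform hM x hl (le_of_lt hh))
    (hT.apply_laplaceTransform hM x hl le_rfl)).congr_deriv ?_
  simp only [Complex.ofReal_zero, mul_zero, Complex.exp_zero, smul_neg, one_smul,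
    intervalIntegral.integral_same, sub_zero]
  module

theorem exists_isResolventAt [CompleteSpace X] (hT : IsC0Semigroup T) (hM : ∀ t, 0 ≤ t → ‖T t‖ ≤ M)
    {dom : Set X} {A : X → X} (hA : IsGenerator T dom A) (hl : 0 < l.re) :
    ∃ R : X →L[ℂ] X, IsResolventAt dom A l R ∧ ∀ x, R x = laplaceTransform (T · x) l := by
  let R₀ : X →ₗ[ℂ] X :=
    { toFun := fun x ↦ laplaceTransform (T · x) l
      map_add' := fun x y ↦ by
        simp only [laplaceTransform, map_add, smul_add]
        exact integral_add (hT.integrableOn_laplace hM x hl) (hT.integrableOn_laplace hM y hl)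
      map_smul' := fun c x ↦ by
        simp only [laplaceTransform, map_smul, smul_comm _ c]
        exact integral_smul c _ }
  let R : X →L[ℂ] X := R₀.mkContinuous (M / l.re) fun x ↦
    (norm_laplaceTransform_le (norm_apply_le_mul_norm hM x) hl).trans_eq (by ring)
  have hderiv (x : X) : HasDerivWithinAt (fun h ↦ T h (R x)) (l • R x - x) (Ioi 0) 0 :=
    hT.hasDerivWithinAt_laplaceTransform hM x hl
  have hcomm {h : ℝ} (hh : 0 ≤ h) (x : X) : R (T h x) = T h (R x) := by
    change laplaceTransform _ l = T h (laplaceTransform _ l)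
    rw [laplaceTransform, laplaceTransform, ← ContinuousLinearMap.integral_comp_comm _
      (hT.integrableOn_laplace hM x hl)]
    refine setIntegral_congr_fun measurableSet_Ioi fun τ hτ ↦ ?_
    rw [map_smul, ← hT.add_apply (le_of_lt hτ) hh, ← hT.add_apply hh (le_of_lt hτ), add_comm]
  refine ⟨R, ⟨fun y ↦ hA.mem_of_hasDerivWithinAt hT (hderiv y), fun y ↦ ?_, fun x hx ↦ ?_⟩,
    fun x ↦ rfl⟩
  · rw [hA.eq_of_hasDerivWithinAt hT (hderiv y), sub_sub_cancel]
  · have hRA : HasDerivWithinAt (fun h ↦ T h (R x)) (R (A x)) (Ioi 0) 0 :=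
      ((R.hasFDerivAt.restrictScalars ℝ).comp_hasDerivWithinAt (0 : ℝ)
        (hA.hasDerivWithinAt hT hx)).congr (fun h hh ↦ (hcomm (le_of_lt hh) x).symm)
        (hcomm le_rfl x).symm
    rw [map_sub, map_smul, (uniqueDiffWithinAt_Ioi 0).eq_deriv _ hRA (hderiv x), sub_sub_cancel]

end IsC0Semigroup

end Semigroup

section ResolventFamily

open MeasureTheory

variable {X : Type u} [NormedAddCommGroup X] [NormedSpace ℂ X] {dom : Set X} {A : X → X}
  {C M ε : ℝ} {G : ℂ → X →L[ℂ] X} {l : ℂ}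

/-- The sector `-2C Re l < |Im l|` around the right half-plane, to which the resolvent extends from
the open right half-plane and the imaginary axis. -/
def extendedSector (C : ℝ) : Set ℂ := {l | -(2 * C * l.re) < |l.im|}

/-- `G` is the resolvent of `A` on the sector `extendedSector C`, with the bounds that follow from
`‖T t‖ ≤ M` in the right half-plane and from `‖R(is, A)‖ ≤ C / |s|` near the imaginary axis. -/
structure IsSectorialResolvent (dom : Set X) (A : X → X) (C M : ℝ) (G : ℂ → X →L[ℂ] X) :
    Prop where
  isResolventAt : ∀ l ∈ extendedSector C, IsResolventAt dom A l (G l)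
  norm_mul_re_le : ∀ l : ℂ, 0 < l.re → ‖G l‖ * l.re ≤ M
  norm_mul_abs_im_le : ∀ l : ℂ, 2 * C * |l.re| < |l.im| → ‖G l‖ * |l.im| ≤ 2 * C

theorem isOpen_extendedSector (C : ℝ) : IsOpen (extendedSector C) :=
  isOpen_lt (by fun_prop) (by fun_prop)

theorem mem_extendedSector_of_re_pos (hC : 1 ≤ C) (hl : 0 < l.re) : l ∈ extendedSector C := by
  have : 0 < 2 * C * l.re := by positivity
  exact (neg_lt_zero.mpr this).trans_le (abs_nonneg _)

theorem mem_extendedSector_of_abs_re_lt (hC : 1 ≤ C) (hl : 2 * C * |l.re| < |l.im|) :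
    l ∈ extendedSector C := by
  refine lt_of_le_of_lt ?_ hl
  rw [← mul_neg]
  gcongr
  exact neg_le_abs _

theorem abs_re_lt_of_mem_extendedSector (hl : l ∈ extendedSector C) (hre : l.re ≤ 0) :
    2 * C * |l.re| < |l.im| := by
  rw [abs_of_nonpos hre, mul_neg]
  exact hl

theorem abs_re_lt_of_pos_re_add (hC : 1 ≤ C) (hpos : 0 < l.re + |l.im| / (4 * C))
    (hl : 2 * C * l.re < |l.im|) : 2 * C * |l.re| < |l.im| := by
  rcases le_total 0 l.re with hre | hre
  · rwa [abs_of_nonneg hre]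
  · rw [← neg_lt_iff_pos_add', lt_div_iff₀ (by positivity)] at hpos
    rw [abs_of_nonpos hre]
    linarith [mul_nonpos_of_nonneg_of_nonpos (by positivity : 0 ≤ C) hre]

theorem IsResolventAt.exists_norm_mul_abs_im_le [CompleteSpace X] {R : X →L[ℂ] X} (hC : 1 ≤ C)
    (hR : IsResolventAt dom A (l.im * Complex.I) R) (hRC : ‖R‖ ≤ C / |l.im|)
    (hl : 2 * C * |l.re| < |l.im|) :
    ∃ Q : X →L[ℂ] X, IsResolventAt dom A l Q ∧ ‖Q‖ * |l.im| ≤ 2 * C := by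
  have him : 0 < |l.im| := lt_of_le_of_lt (by positivity) hl
  rw [le_div_iff₀ him] at hRC
  have hsmall : ‖(l.re : ℂ)‖ * ‖R‖ < 1 / 2 := by
    rw [Complex.norm_real, Real.norm_eq_abs]
    refine lt_of_mul_lt_mul_right ?_ him.le
    nlinarith [abs_nonneg l.re]
  obtain ⟨Q, hQ⟩ := hR.exists_add (hsmall.trans one_half_lt_one)
  have hQR := hQ.norm_le_two_mul hR (by rw [add_sub_cancel_left]; exact hsmall.le)
  rw [add_comm, Complex.re_add_im] at hQ
  exact ⟨Q, hQ, by nlinarith⟩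

theorem IsC0Semigroup.exists_isSectorialResolvent [CompleteSpace X] {T : ℝ → X →L[ℂ] X}
    (hT : IsC0Semigroup T) (hM : ∀ t, 0 ≤ t → ‖T t‖ ≤ M) (hA : IsGenerator T dom A) (hC : 1 ≤ C)
    (hR : ∀ s : ℝ, s ≠ 0 → ∃ R : X →L[ℂ] X,
      IsResolventAt dom A ((s : ℂ) * Complex.I) R ∧ ‖R‖ ≤ C / |s|) :
    ∃ G, IsSectorialResolvent dom A C M G := by
  have hright {l : ℂ} (hl : 0 < l.re) :
      ∃ Q : X →L[ℂ] X, IsResolventAt dom A l Q ∧ ‖Q‖ * l.re ≤ M := by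
    obtain ⟨Q, hQ, hQapply⟩ := hT.exists_isResolventAt hM hA hl
    have hM0 : 0 ≤ M := (norm_nonneg _).trans (hM 0 le_rfl)
    refine ⟨Q, hQ, (le_div_iff₀ hl).mp (Q.opNorm_le_bound (by positivity) fun x ↦ ?_)⟩
    rw [hQapply]
    exact (norm_laplaceTransform_le (norm_apply_le_mul_norm hM x) hl).trans_eq (by ring)
  have hnear {l : ℂ} (hl : 2 * C * |l.re| < |l.im|) :
      ∃ Q : X →L[ℂ] X, IsResolventAt dom A l Q ∧ ‖Q‖ * |l.im| ≤ 2 * C := by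
    have him : 0 < |l.im| := lt_of_le_of_lt (by positivity) hl
    obtain ⟨R, hRres, hRC⟩ := hR l.im (abs_pos.mp him)
    exact hRres.exists_norm_mul_abs_im_le hC hRC hl
  have hex (l : ℂ) : ∃ Q : X →L[ℂ] X, l ∈ extendedSector C → IsResolventAt dom A l Q := by
    by_cases hl : l ∈ extendedSector C
    · rcases lt_or_ge 0 l.re with hpos | hnonpos
      · exact (hright hpos).imp fun Q hQ _ ↦ hQ.1
      · exact (hnear (abs_re_lt_of_mem_extendedSector hl hnonpos)).imp fun Q hQ _ ↦ hQ.1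
    · exact ⟨0, fun h ↦ absurd h hl⟩
  choose G hG using hex
  refine ⟨G, hG, fun l hl ↦ ?_, fun l hl ↦ ?_⟩
  · obtain ⟨Q, hQ, hQM⟩ := hright hl
    rwa [(hG l (mem_extendedSector_of_re_pos hC hl)).unique hQ]
  · obtain ⟨Q, hQ, hQC⟩ := hnear hl
    rwa [(hG l (mem_extendedSector_of_abs_re_lt hC hl)).unique hQ]

namespace IsSectorialResolvent

variable (hG : IsSectorialResolvent dom A C M G)
include hG

theorem apply_eq_laplaceTransform [CompleteSpace X] {T : ℝ → X →L[ℂ] X} (hT : IsC0Semigroup T)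
    (hM : ∀ t, 0 ≤ t → ‖T t‖ ≤ M) (hA : IsGenerator T dom A) (hC : 1 ≤ C) (hl : 0 < l.re) (x : X) :
    G l x = laplaceTransform (T · x) l := by
  obtain ⟨R, hRres, hRapply⟩ := hT.exists_isResolventAt hM hA hl
  rw [(hG.isResolventAt l (mem_extendedSector_of_re_pos hC hl)).unique hRres, hRapply]

theorem hasDerivAt (hl : l ∈ extendedSector C) : HasDerivAt G (-(G l * G l)) l :=
  IsResolventAt.hasDerivAt <|
    ((isOpen_extendedSector C).eventually_mem hl).mono fun m hm ↦ hG.isResolventAt m hm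

theorem hasDerivAt_laplaceTransform [CompleteSpace X] {T : ℝ → X →L[ℂ] X} (hT : IsC0Semigroup T)
    (hM : ∀ t, 0 ≤ t → ‖T t‖ ≤ M) (hA : IsGenerator T dom A) (hC : 1 ≤ C) (hl : 0 < l.re) (x : X) :
    HasDerivAt (laplaceTransform (T · x)) ((-(G l * G l)) x) l := by
  have hderiv := hG.hasDerivAt (mem_extendedSector_of_re_pos hC hl)
  refine ((ContinuousLinearMap.apply ℂ X x).hasFDerivAt.comp_hasDerivAt l
    hderiv).congr_of_eventuallyEq ?_
  filter_upwards [(isOpen_lt continuous_const Complex.continuous_re).mem_nhds hl] with m hm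
  exact (hG.apply_eq_laplaceTransform hT hM hA hC hm x).symm

theorem norm_mul_le_of_le_re_add (hC : 1 ≤ C) (hM : 1 ≤ M) (hε : 0 < ε)
    (hl : ε ≤ l.re + |l.im| / (4 * C)) :
    ‖G l‖ * ε ≤ 2 * M ∧ ‖G l‖ * |l.im| ≤ 2 * C * M := by
  rcases le_or_gt |l.im| (2 * C * l.re) with hright | hleft
  · have him : |l.im| / (4 * C) ≤ l.re / 2 := by
      rw [div_le_iff₀ (by positivity)]
      linarith
    have hM' := hG.norm_mul_re_le l (by linarith)
    constructor
    · calc ‖G l‖ * ε ≤ ‖G l‖ * (2 * l.re) := by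
            gcongr
            linarith
        _ = 2 * (‖G l‖ * l.re) := by ring
        _ ≤ 2 * M := by gcongr
    · calc ‖G l‖ * |l.im| ≤ ‖G l‖ * (2 * C * l.re) := by gcongr
        _ = 2 * C * (‖G l‖ * l.re) := by ring
        _ ≤ 2 * C * M := by gcongr
  · have hre : l.re < 2 * (|l.im| / (4 * C)) := by
      rw [← mul_div_assoc, lt_div_iff₀ (by positivity)]
      linarith
    have hC' := hG.norm_mul_abs_im_le l (abs_re_lt_of_pos_re_add hC (hε.trans_le hl) hleft)
    constructor
    · calc ‖G l‖ * ε ≤ ‖G l‖ * (3 * (|l.im| / (4 * C))) := by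
            gcongr
            linarith
        _ = 3 / (4 * C) * (‖G l‖ * |l.im|) := by ring
        _ ≤ 3 / (4 * C) * (2 * C) := by gcongr
        _ = 3 / 2 := by
            field_simp
            norm_num
        _ ≤ 2 * M := by linarith
    · exact hC'.trans (le_mul_of_one_le_right (by positivity) hM)

end IsSectorialResolvent

end ResolventFamily

section RayIntegral

open MeasureTheory Set

variable {E : Type*} [NormedAddCommGroup E] [NormedSpace ℂ E] {F H : ℂ → E} {p v w z : ℂ}
  {K N N' δ : ℝ} {s : Set ℂ}

theorem norm_smul_le_of_le {c : ℂ} {x : E} {a b : ℝ} (hc : ‖c‖ ≤ a) (hx : ‖x‖ ≤ b) :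
    ‖c • x‖ ≤ a * b :=
  (norm_smul_le c x).trans (mul_le_mul hc hx (norm_nonneg x) ((norm_nonneg c).trans hc))

/-- The integral of `F` over the ray from `p` in direction `w`, oriented towards infinity. -/
noncomputable def rayIntegral (F : ℂ → E) (p w : ℂ) : E :=
  ∫ r in Ioi (0 : ℝ), w • F (p + r * w)

theorem hasDerivAt_comp_ray {H' : E} {r : ℝ} (h : HasDerivAt H H' (p + r * w)) :
    HasDerivAt (fun r : ℝ ↦ H (p + r * w)) (w • H') r := by
  have hray : HasDerivAt (fun r : ℝ ↦ p + r * w) w r := by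
    simpa using ((hasDerivAt_id r).ofReal_comp.mul_const w).const_add p
  exact h.scomp r hray

theorem integrableOn_ray {g : ℝ → ℝ} (hF : ∀ r : ℝ, 0 < r → ContinuousAt F (p + r * w))
    (hg : IntegrableOn g (Ioi 0)) (hbound : ∀ r : ℝ, 0 < r → ‖F (p + r * w)‖ ≤ g r) :
    IntegrableOn (fun r : ℝ ↦ w • F (p + r * w)) (Ioi 0) := by
  refine Integrable.smul w (hg.mono' ?_ ((ae_restrict_mem measurableSet_Ioi).mono hbound))
  refine ContinuousOn.aestronglyMeasurable (fun r hr ↦ ?_) measurableSet_Ioi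
  exact (ContinuousAt.comp (f := fun r : ℝ ↦ p + r * w) (hF r hr)
    (by fun_prop)).continuousWithinAt

theorem norm_rayIntegral_le (hδ : 0 < δ)
    (hbound : ∀ r : ℝ, 0 < r → ‖F (p + r * w)‖ ≤ K * Real.exp (-δ * r)) :
    ‖rayIntegral F p w‖ ≤ ‖w‖ * (K / δ) := by
  calc ‖rayIntegral F p w‖ ≤ ∫ r in Ioi (0 : ℝ), ‖w‖ * (K * Real.exp (-δ * r)) := by
        refine norm_integral_le_of_norm_le
          (((exp_neg_integrableOn_Ioi 0 hδ).const_mul K).const_mul ‖w‖)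
          ((ae_restrict_mem measurableSet_Ioi).mono fun r hr ↦ ?_)
        rw [norm_smul]
        exact mul_le_mul_of_nonneg_left (hbound r hr) (norm_nonneg w)
    _ = ‖w‖ * (K / δ) := by
        rw [integral_const_mul, integral_const_mul, integral_exp_mul_Ioi (by linarith)]
        simp [div_eq_mul_inv]

theorem rayIntegral_of_hasDerivAt [CompleteSpace E] {H' : ℂ → E}
    (hderiv : ∀ r : ℝ, 0 ≤ r → HasDerivAt H (H' (p + r * w)) (p + r * w))
    (hint : IntegrableOn (fun r : ℝ ↦ w • H' (p + r * w)) (Ioi 0))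
    (hlim : Tendsto (fun r : ℝ ↦ H (p + r * w)) atTop (𝓝 0)) :
    rayIntegral H' p w = -H p := by
  simpa [rayIntegral] using
    integral_Ioi_of_hasDerivAt_of_tendsto' (fun r hr ↦ hasDerivAt_comp_ray (hderiv r hr)) hint hlim

theorem norm_primitive_sub_le {F : ℂ → E} {Φ : ℂ → E} {ρ : ℝ} (hρ : 0 ≤ ρ)
    (hΦ : ∀ q ∈ segment ℝ v w, HasDerivAt Φ (F (p + ρ * q)) (p + ρ * q))
    (hK : ∀ q ∈ segment ℝ v w, ‖F (p + ρ * q)‖ ≤ K) :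
    ‖Φ (p + ρ * w) - Φ (p + ρ * v)‖ ≤ ρ * K * ‖w - v‖ := by
  refine (convex_segment v w).norm_image_sub_le_of_norm_hasDerivWithin_le
    (f := fun q ↦ Φ (p + ρ * q)) (f' := fun q ↦ (ρ : ℂ) • F (p + ρ * q)) (fun q hq ↦ ?_)
    (fun q hq ↦ ?_) (left_mem_segment ℝ v w) (right_mem_segment ℝ v w)
  · have hlin : HasDerivAt (fun q : ℂ ↦ p + ρ * q) ρ q := by
      simpa using ((hasDerivAt_id q).const_mul (ρ : ℂ)).const_add p
    exact ((hΦ q hq).scomp q hlin).hasDerivWithinAt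
  · rw [norm_smul, Complex.norm_real, Real.norm_of_nonneg hρ]
    gcongr
    exact hK q hq

theorem tendsto_mul_inv_one_add_sq : Tendsto (fun r : ℝ ↦ r * (1 + r ^ 2)⁻¹) atTop (𝓝 0) := by
  refine squeeze_zero' ?_ ?_ tendsto_inv_atTop_zero
  · filter_upwards [eventually_ge_atTop 0] with r hr using by positivity
  · filter_upwards [eventually_gt_atTop 0] with r hr
    rw [← div_eq_mul_inv, div_le_iff₀ (by positivity), inv_mul_eq_div, le_div_iff₀ hr]
    nlinarith

theorem rayIntegral_eq_of_segment [CompleteSpace E] {U : Set ℂ} (hU : IsOpen U)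
    (hconv : Convex ℝ U) (hF : DifferentiableOn ℂ F U)
    (hmem : ∀ q ∈ segment ℝ v w, ∀ r : ℝ, 0 ≤ r → p + r * q ∈ U)
    (hbound : ∀ q ∈ segment ℝ v w, ∀ r : ℝ, 0 < r → ‖F (p + r * q)‖ ≤ K * (1 + r ^ 2)⁻¹) :
    rayIntegral F p v = rayIntegral F p w := by
  obtain ⟨Φ, hΦ⟩ := hconv.exists_forall_hasDerivWithinAt hF
  have hderiv {q : ℂ} (hq : q ∈ segment ℝ v w) {r : ℝ} (hr : 0 ≤ r) :
      HasDerivAt Φ (F (p + r * q)) (p + r * q) :=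
    (hΦ _ (hmem q hq r hr)).hasDerivAt (hU.mem_nhds (hmem q hq r hr))
  have hcont {q : ℂ} (hq : q ∈ segment ℝ v w) {r : ℝ} (hr : 0 ≤ r) :
      ContinuousAt F (p + r * q) :=
    (hF.differentiableAt (hU.mem_nhds (hmem q hq r hr))).continuousAt
  have hlim {q : ℂ} (hq : q ∈ segment ℝ v w) :
      Tendsto (fun ρ : ℝ ↦ Φ (p + ρ * q) - Φ p) atTop (𝓝 (rayIntegral F p q)) := by
    have hint := integrableOn_ray (fun r hr ↦ hcont hq hr.le)
      (integrable_inv_one_add_sq.const_mul K).integrableOn (hbound q hq)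
    refine (intervalIntegral_tendsto_integral_Ioi 0 hint tendsto_id).congr' ?_
    filter_upwards [eventually_ge_atTop 0] with ρ hρ
    rw [id, intervalIntegral.integral_eq_sub_of_hasDerivAt
      (f := fun r : ℝ ↦ Φ (p + r * q))
      (fun r hr ↦ hasDerivAt_comp_ray (hderiv hq (by rw [uIcc_of_le hρ] at hr; exact hr.1)))
      ((intervalIntegrable_iff_integrableOn_Ioc_of_le hρ).mpr
        (hint.mono_set Ioc_subset_Ioi_self))]
    simp
  have hsmall : Tendsto (fun ρ : ℝ ↦ Φ (p + ρ * w) - Φ (p + ρ * v)) atTop (𝓝 0) := by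
    refine squeeze_zero_norm' (a := fun ρ ↦ ρ * (1 + ρ ^ 2)⁻¹ * (K * ‖w - v‖)) ?_
      (by simpa using tendsto_mul_inv_one_add_sq.mul_const (K * ‖w - v‖))
    filter_upwards [eventually_gt_atTop 0] with ρ hρ
    exact (norm_primitive_sub_le hρ.le (fun q hq ↦ hderiv hq hρ.le)
      (fun q hq ↦ hbound q hq ρ hρ)).trans_eq (by ring)
  have hdiff := (hlim (right_mem_segment ℝ v w)).sub (hlim (left_mem_segment ℝ v w))
  simp only [sub_sub_sub_cancel_right] at hdiff
  exact (sub_eq_zero.mp (tendsto_nhds_unique hdiff hsmall)).symm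

theorem integrableOn_exp_smul_ray (hδ : 0 < δ)
    (hF : ∀ r : ℝ, 0 < r → ContinuousAt F (p + r * w))
    (hN : ∀ r : ℝ, 0 < r → ‖F (p + r * w)‖ ≤ N)
    (hexp : ∀ r : ℝ, 0 < r → ‖Complex.exp ((p + r * w) * z)‖ ≤ K * Real.exp (-δ * r)) :
    IntegrableOn (fun r : ℝ ↦ w • Complex.exp ((p + r * w) * z) • F (p + r * w)) (Ioi 0) :=
  integrableOn_ray (F := fun l ↦ Complex.exp (l * z) • F l)
    (fun r hr ↦ ContinuousAt.smul (f := fun l : ℂ ↦ Complex.exp (l * z)) (by fun_prop) (hF r hr))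
    (((exp_neg_integrableOn_Ioi 0 hδ).const_mul K).mul_const N)
    (fun r hr ↦ norm_smul_le_of_le (hexp r hr) (hN r hr))

theorem differentiableAt_rayIntegral_exp_smul (hδ : 0 < δ) (hs : s ∈ 𝓝 z)
    (hF : ∀ r : ℝ, 0 < r → ContinuousAt F (p + r * w))
    (hN : ∀ r : ℝ, 0 < r → ‖F (p + r * w)‖ ≤ N)
    (hN' : ∀ r : ℝ, 0 < r → ‖(p + r * w) • F (p + r * w)‖ ≤ N')
    (hexp : ∀ ζ ∈ s, ∀ r : ℝ, 0 < r →
      ‖Complex.exp ((p + r * w) * ζ)‖ ≤ K * Real.exp (-δ * r)) :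
    DifferentiableAt ℂ (fun ζ ↦ rayIntegral (fun l ↦ Complex.exp (l * ζ) • F l) p w) z := by
  have hz : z ∈ s := mem_of_mem_nhds hs
  have hint' := integrableOn_exp_smul_ray (F := fun l ↦ l • F l) hδ
    (fun r hr ↦ continuousAt_id.smul (hF r hr)) hN' (hexp z hz)
  refine (hasDerivAt_integral_of_dominated_loc_of_deriv_le (μ := volume.restrict (Ioi 0))
    (F := fun ζ (r : ℝ) ↦ w • Complex.exp ((p + r * w) * ζ) • F (p + r * w))
    (F' := fun ζ (r : ℝ) ↦ w • Complex.exp ((p + r * w) * ζ) • (p + r * w) • F (p + r * w))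
    (bound := fun r ↦ ‖w‖ * (K * Real.exp (-δ * r) * N')) hs ?_
    (integrableOn_exp_smul_ray hδ hF hN (hexp z hz)) hint'.aestronglyMeasurable ?_
    ((((exp_neg_integrableOn_Ioi 0 hδ).const_mul K).mul_const N').const_mul ‖w‖)
    ?_).2.differentiableAt
  · filter_upwards [hs] with ζ hζ
    exact (integrableOn_exp_smul_ray hδ hF hN (hexp ζ hζ)).aestronglyMeasurable
  · filter_upwards [ae_restrict_mem measurableSet_Ioi] with r hr ζ hζ
    exact norm_smul_le_of_le le_rfl (norm_smul_le_of_le (hexp ζ hζ r hr) (hN' r hr))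
  · refine Eventually.of_forall fun r ζ _ ↦ ?_
    have hderiv : HasDerivAt (fun ζ ↦ Complex.exp ((p + r * w) * ζ))
        (Complex.exp ((p + r * w) * ζ) * (p + r * w)) ζ := by
      simpa using ((hasDerivAt_id ζ).const_mul (p + r * w)).cexp
    refine ((hderiv.smul_const _).const_smul w).congr_deriv ?_
    rw [mul_smul]

end RayIntegral

section BromwichIntegral

open MeasureTheory Set
open scoped ComplexConjugate

variable {E : Type*} [NormedAddCommGroup E] [NormedSpace ℂ E] {F H : ℂ → E} {p w : ℂ} {K δ : ℝ}

/-- The integral `(2πi)⁻¹ ∫ F` over the wedge that comes from infinity along the ray from `p` in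
direction `conj w` and returns to infinity along the ray in direction `w`. For `w = i` this is the
integral over a vertical line of the Bromwich inversion formula. -/
noncomputable def bromwichIntegral (F : ℂ → E) (p w : ℂ) : E :=
  (2 * Real.pi * Complex.I)⁻¹ • (rayIntegral F p w - rayIntegral F p (conj w))

theorem bromwichIntegral_I (hF : Integrable fun s : ℝ ↦ F (p + s * Complex.I)) :
    bromwichIntegral F p Complex.I =
      ((2 * Real.pi)⁻¹ : ℝ) • ∫ s : ℝ, F (p + s * Complex.I) := by
  have hlower : ∫ s in Ioi (0 : ℝ), F (p - s * Complex.I) =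
      ∫ s in Iic (0 : ℝ), F (p + s * Complex.I) := by
    simpa [sub_eq_add_neg] using integral_comp_neg_Ioi 0 fun s : ℝ ↦ F (p + s * Complex.I)
  rw [← intervalIntegral.integral_Iic_add_Ioi hF.integrableOn hF.integrableOn (b := 0), ← hlower]
  simp only [bromwichIntegral, rayIntegral, Complex.conj_I, integral_smul, neg_smul, mul_neg,
    integral_neg, sub_neg_eq_add, ← sub_eq_add_neg]
  rw [← smul_add, smul_smul, ← Complex.coe_smul,
    add_comm (∫ s in Ioi (0 : ℝ), F (p - s * Complex.I))]
  congr 1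
  push_cast
  field_simp

theorem bromwichIntegral_of_hasDerivAt [CompleteSpace E] {H' : ℂ → E}
    (hderiv : ∀ q ∈ ({w, conj w} : Set ℂ), ∀ r : ℝ, 0 ≤ r →
      HasDerivAt H (H' (p + r * q)) (p + r * q))
    (hint : ∀ q ∈ ({w, conj w} : Set ℂ),
      IntegrableOn (fun r : ℝ ↦ q • H' (p + r * q)) (Ioi 0))
    (hlim : ∀ q ∈ ({w, conj w} : Set ℂ), Tendsto (fun r : ℝ ↦ H (p + r * q)) atTop (𝓝 0)) :
    bromwichIntegral H' p w = 0 := by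
  have hray {q : ℂ} (hq : q ∈ ({w, conj w} : Set ℂ)) : rayIntegral H' p q = -H p :=
    rayIntegral_of_hasDerivAt (hderiv q hq) (hint q hq) (hlim q hq)
  rw [bromwichIntegral, hray (by simp), hray (by simp), sub_self, smul_zero]

theorem norm_bromwichIntegral_le (hδ : 0 < δ)
    (hbound : ∀ q ∈ ({w, conj w} : Set ℂ), ∀ r : ℝ, 0 < r →
      ‖F (p + r * q)‖ ≤ K * Real.exp (-δ * r)) :
    ‖bromwichIntegral F p w‖ ≤ ‖w‖ * (K / δ) / Real.pi := by
  have hw := norm_rayIntegral_le hδ (hbound w (by simp))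
  have hw' := norm_rayIntegral_le hδ (hbound (conj w) (by simp))
  rw [Complex.norm_conj] at hw'
  have hconst : ‖(2 * Real.pi * Complex.I : ℂ)⁻¹‖ = (2 * Real.pi)⁻¹ := by
    simp [abs_of_pos Real.pi_pos]
  rw [bromwichIntegral, norm_smul, hconst]
  calc (2 * Real.pi)⁻¹ * ‖rayIntegral F p w - rayIntegral F p (conj w)‖
      ≤ (2 * Real.pi)⁻¹ * (‖w‖ * (K / δ) + ‖w‖ * (K / δ)) := by
        gcongr
        exact (norm_sub_le _ _).trans (add_le_add hw hw')
    _ = ‖w‖ * (K / δ) / Real.pi := by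
        field_simp
        ring

theorem bromwichIntegral_add {F₁ F₂ : ℂ → E}
    (h₁ : ∀ q ∈ ({w, conj w} : Set ℂ), IntegrableOn (fun r : ℝ ↦ q • F₁ (p + r * q)) (Ioi 0))
    (h₂ : ∀ q ∈ ({w, conj w} : Set ℂ), IntegrableOn (fun r : ℝ ↦ q • F₂ (p + r * q)) (Ioi 0)) :
    bromwichIntegral (fun l ↦ F₁ l + F₂ l) p w =
      bromwichIntegral F₁ p w + bromwichIntegral F₂ p w := by
  have hray {q : ℂ} (hq : q ∈ ({w, conj w} : Set ℂ)) :
      rayIntegral (fun l ↦ F₁ l + F₂ l) p q = rayIntegral F₁ p q + rayIntegral F₂ p q := by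
    simp only [rayIntegral, smul_add]
    exact integral_add (h₁ q hq) (h₂ q hq)
  rw [bromwichIntegral, hray (by simp), hray (by simp), bromwichIntegral, bromwichIntegral,
    ← smul_add, add_sub_add_comm]

theorem bromwichIntegral_const_smul (c : ℂ) :
    bromwichIntegral (fun l ↦ c • F l) p w = c • bromwichIntegral F p w := by
  simp only [bromwichIntegral, rayIntegral, smul_comm _ c, integral_smul, ← smul_sub]

theorem bromwichIntegral_exp_smul_of_hasDerivAt [CompleteSpace E] {F' : ℂ → E} {t : ℂ}
    (hF : ∀ q ∈ ({w, conj w} : Set ℂ), ∀ r : ℝ, 0 ≤ r →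
      HasDerivAt F (F' (p + r * q)) (p + r * q))
    (hint : ∀ q ∈ ({w, conj w} : Set ℂ), IntegrableOn
      (fun r : ℝ ↦ q • Complex.exp ((p + r * q) * t) • F (p + r * q)) (Ioi 0))
    (hint' : ∀ q ∈ ({w, conj w} : Set ℂ), IntegrableOn
      (fun r : ℝ ↦ q • Complex.exp ((p + r * q) * t) • F' (p + r * q)) (Ioi 0))
    (hlim : ∀ q ∈ ({w, conj w} : Set ℂ),
      Tendsto (fun r : ℝ ↦ Complex.exp ((p + r * q) * t) • F (p + r * q)) atTop (𝓝 0)) :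
    bromwichIntegral (fun l ↦ Complex.exp (l * t) • F' l) p w =
      -(t • bromwichIntegral (fun l ↦ Complex.exp (l * t) • F l) p w) := by
  have hsmul : ∀ q ∈ ({w, conj w} : Set ℂ), IntegrableOn
      (fun r : ℝ ↦ q • t • Complex.exp ((p + r * q) * t) • F (p + r * q)) (Ioi 0) :=
    fun q hq ↦ by
      simp only [smul_comm q t]
      exact (hint q hq).smul t
  rw [eq_neg_iff_add_eq_zero, ← bromwichIntegral_const_smul, ← bromwichIntegral_add hint' hsmul]
  refine bromwichIntegral_of_hasDerivAt (H := fun l ↦ Complex.exp (l * t) • F l)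
    (fun q hq r hr ↦ ?_) (fun q hq ↦ ?_) hlim
  · have hexp : HasDerivAt (fun l ↦ Complex.exp (l * t)) (Complex.exp ((p + r * q) * t) * t)
        (p + r * q) := by
      simpa using ((hasDerivAt_id (p + r * q)).mul_const t).cexp
    refine (hexp.smul (hF q hq r hr)).congr_deriv ?_
    rw [mul_smul, smul_comm t]
  · simp only [smul_add]
    exact (hint' q hq).add (hsmul q hq)

theorem bromwichIntegral_apply [CompleteSpace E] {X : Type*} [NormedAddCommGroup X]
    [NormedSpace ℂ X] {F : ℂ → X →L[ℂ] E}
    (hF : ∀ q ∈ ({w, conj w} : Set ℂ), IntegrableOn (fun r : ℝ ↦ q • F (p + r * q)) (Ioi 0))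
    (x : X) : bromwichIntegral F p w x = bromwichIntegral (fun l ↦ F l x) p w := by
  simp only [bromwichIntegral, rayIntegral, smul_apply,
    sub_apply, ContinuousLinearMap.integral_apply (hF w (by simp)),
    ContinuousLinearMap.integral_apply (hF (conj w) (by simp))]

end BromwichIntegral

section LaplaceInversion

open MeasureTheory Set FourierTransform

variable {X : Type u} [NormedAddCommGroup X] [NormedSpace ℂ X] {f : ℝ → X} {B ε : ℝ}

theorem fourier_indicator_exp_smul (f : ℝ → X) (ε ξ : ℝ) :
    𝓕 ((Ioi 0).indicator fun τ : ℝ ↦ Complex.exp (-(ε * τ)) • f τ) ξ =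
      laplaceTransform f (ε + (2 * Real.pi * ξ : ℝ) * Complex.I) := by
  rw [Real.fourier_real_eq_integral_exp_smul, laplaceTransform,
    ← integral_indicator measurableSet_Ioi]
  congr 1 with τ
  by_cases hτ : τ ∈ Ioi 0
  · simp only [indicator_of_mem hτ, smul_smul, ← Complex.exp_add]
    congr 2
    push_cast
    ring
  · simp only [indicator_of_notMem hτ, smul_zero]

theorem integrable_indicator_exp_smul (hf : ContinuousOn f (Ioi 0))
    (hB : ∀ τ, 0 < τ → ‖f τ‖ ≤ B) (hε : 0 < ε) :
    Integrable ((Ioi 0).indicator fun τ : ℝ ↦ Complex.exp (-(ε * τ)) • f τ) :=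
  (integrable_indicator_iff measurableSet_Ioi).mpr <|
    integrableOn_laplace_integrand hf hB (l := ε) (by simpa using hε)

theorem integrable_smul_indicator_exp_smul (hf : ContinuousOn f (Ioi 0))
    (hB : ∀ τ, 0 < τ → ‖f τ‖ ≤ B) (hε : 0 < ε) :
    Integrable fun τ : ℝ ↦ τ • (Ioi 0).indicator (fun τ : ℝ ↦ Complex.exp (-(ε * τ)) • f τ) τ := by
  have hdom : IntegrableOn (fun τ : ℝ ↦ τ * Real.exp (-ε * τ) * B) (Ioi 0) := by
    have := integrableOn_rpow_mul_exp_neg_mul_rpow (s := 1) (by norm_num) one_pos hε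
    simp only [Real.rpow_one] at this
    exact this.mul_const B
  simp only [← indicator_smul_apply (Ioi 0) (fun τ : ℝ ↦ τ)]
  rw [integrable_indicator_iff measurableSet_Ioi]
  refine hdom.mono' (ContinuousOn.aestronglyMeasurable ?_ measurableSet_Ioi)
    ((ae_restrict_mem measurableSet_Ioi).mono fun τ hτ ↦ ?_)
  · exact ContinuousOn.smul (f := fun τ : ℝ ↦ τ) (by fun_prop) (ContinuousOn.smul (by fun_prop) hf)
  · rw [norm_smul, Real.norm_of_nonneg (le_of_lt hτ), mul_assoc]
    exact mul_le_mul_of_nonneg_left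
      (by simpa using norm_laplace_integrand_le (l := ε) hB hτ) (le_of_lt hτ)

theorem fourier_smul_indicator_exp_smul (hf : ContinuousOn f (Ioi 0))
    (hB : ∀ τ, 0 < τ → ‖f τ‖ ≤ B) (hε : 0 < ε) {ξ : ℝ} {L' : X}
    (hL : HasDerivAt (laplaceTransform f) L' (ε + (2 * Real.pi * ξ : ℝ) * Complex.I)) :
    𝓕 (fun τ : ℝ ↦ (-2 * Real.pi * Complex.I * τ) •
      (Ioi 0).indicator (fun τ : ℝ ↦ Complex.exp (-(ε * τ)) • f τ) τ) ξ =
        (2 * Real.pi * Complex.I) • L' := by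
  have hfourier := Real.hasDerivAt_fourier (integrable_indicator_exp_smul hf hB hε)
    (integrable_smul_indicator_exp_smul hf hB hε) ξ
  have hline : HasDerivAt (fun ξ : ℝ ↦ (ε + (2 * Real.pi * ξ : ℝ) * Complex.I : ℂ))
      (2 * Real.pi * Complex.I) ξ := by
    simpa using (((hasDerivAt_id ξ).const_mul (2 * Real.pi)).ofReal_comp.mul_const
      Complex.I).const_add (ε : ℂ)
  simp only [funext (fourier_indicator_exp_smul f ε)] at hfourier
  exact hfourier.unique (HasDerivAt.scomp (g₁ := laplaceTransform f) ξ hL hline)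

theorem integral_exp_smul_deriv_laplaceTransform [CompleteSpace X] {L' : ℂ → X}
    (hf : ContinuousOn f (Ioi 0)) (hB : ∀ τ, 0 < τ → ‖f τ‖ ≤ B) (hε : 0 < ε)
    (hL : ∀ s : ℝ, HasDerivAt (laplaceTransform f) (L' (ε + s * Complex.I)) (ε + s * Complex.I))
    (hL' : Integrable fun s : ℝ ↦ L' (ε + s * Complex.I)) {t : ℝ} (ht : 0 < t) :
    ∫ ξ : ℝ, Complex.exp ((2 * Real.pi * (ξ * t) : ℝ) * Complex.I) •
      (2 * Real.pi * Complex.I) • L' (ε + (2 * Real.pi * ξ : ℝ) * Complex.I) =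
        (-2 * Real.pi * Complex.I * t) • Complex.exp (-(ε * t)) • f t := by
  set g : ℝ → X := (Ioi 0).indicator fun τ : ℝ ↦ Complex.exp (-(ε * τ)) • f τ with hg
  set h : ℝ → X := fun τ : ℝ ↦ (-2 * Real.pi * Complex.I * τ) • g τ with hh
  have hfourier : 𝓕 h = fun ξ ↦ (2 * Real.pi * Complex.I) •
      L' (ε + (2 * Real.pi * ξ : ℝ) * Complex.I) :=
    funext fun ξ ↦ fourier_smul_indicator_exp_smul hf hB hε (hL _)
  have hint : Integrable h := by
    refine ((integrable_smul_indicator_exp_smul hf hB hε).smul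
      (-2 * Real.pi * Complex.I : ℂ)).congr (Eventually.of_forall fun τ ↦ ?_)
    simp only [hh, hg, Pi.smul_apply, mul_smul, Complex.coe_smul]
  have hfourier_int : Integrable (𝓕 h) := by
    rw [hfourier]
    exact Integrable.smul (2 * Real.pi * Complex.I : ℂ)
      ((integrable_comp_mul_left_iff _ Real.two_pi_pos.ne').mpr hL')
  have hcont : ContinuousAt h t := by
    refine ContinuousAt.smul (by fun_prop) (ContinuousAt.congr ?_
      ((eventually_gt_nhds ht).mono fun τ hτ ↦ (indicator_of_mem hτ _).symm))
    exact ContinuousAt.smul (by fun_prop) (hf.continuousAt (Ioi_mem_nhds ht))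
  have hinv := hint.fourierInv_fourier_eq hfourier_int hcont
  rw [Real.fourierInv_eq', hfourier] at hinv
  simpa only [hh, hg, indicator_of_mem (mem_Ioi.mpr ht), RCLike.inner_apply, conj_trivial,
    mul_comm t] using hinv

theorem bromwichIntegral_exp_smul_deriv_laplaceTransform [CompleteSpace X] {L' : ℂ → X}
    (hf : ContinuousOn f (Ioi 0)) (hB : ∀ τ, 0 < τ → ‖f τ‖ ≤ B) (hε : 0 < ε)
    (hL : ∀ s : ℝ, HasDerivAt (laplaceTransform f) (L' (ε + s * Complex.I)) (ε + s * Complex.I))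
    (hL' : Integrable fun s : ℝ ↦ L' (ε + s * Complex.I)) {t : ℝ} (ht : 0 < t) :
    bromwichIntegral (fun l ↦ Complex.exp (l * t) • L' l) ε Complex.I = -(t • f t) := by
  have hexp : Integrable fun s : ℝ ↦
      Complex.exp ((ε + s * Complex.I) * t) • L' (ε + s * Complex.I) := by
    refine hL'.bdd_smul (φ := fun s : ℝ ↦ Complex.exp ((ε + s * Complex.I) * t))
      (Real.exp (ε * t)) (Continuous.aestronglyMeasurable (by fun_prop))
      (Eventually.of_forall fun s ↦ ?_)
    simp [Complex.norm_exp]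
  have hscale := Measure.integral_comp_mul_left
    (fun s : ℝ ↦ Complex.exp ((ε + s * Complex.I) * t) • L' (ε + s * Complex.I)) (2 * Real.pi)
  rw [abs_of_pos (by positivity)] at hscale
  rw [bromwichIntegral_I hexp, ← hscale]
  calc ∫ ξ : ℝ, Complex.exp ((ε + (2 * Real.pi * ξ : ℝ) * Complex.I) * t) •
        L' (ε + (2 * Real.pi * ξ : ℝ) * Complex.I)
      = (Complex.exp (ε * t) / (2 * Real.pi * Complex.I)) •
          (-2 * Real.pi * Complex.I * t) • Complex.exp (-(ε * t)) • f t := by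
        rw [← integral_exp_smul_deriv_laplaceTransform hf hB hε hL hL' ht, ← integral_smul]
        congr 1 with ξ
        simp only [smul_smul, add_mul, Complex.exp_add]
        congr 1
        push_cast
        field_simp
    _ = -(t • f t) := by
        rw [← Complex.coe_smul, ← neg_smul, Complex.exp_neg, smul_smul, smul_smul]
        congr 1
        field_simp

end LaplaceInversion

section Contour

open scoped ComplexConjugate

variable {C ε r : ℝ} {q v w z : ℂ}

/-- The direction `-1/(4C) + i` of the upper ray of the contour over which the semigroup is
represented; the lower ray has the conjugate direction. -/
noncomputable def slantedDirection (C : ℝ) : ℂ := ⟨-(4 * C)⁻¹, 1⟩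

/-- The directions between the vertical ones and `slantedDirection C` or its conjugate, normalised
to have imaginary part `±1`. -/
def rayDirections (C : ℝ) : Set ℂ := {w | |w.im| = 1 ∧ -(4 * C)⁻¹ ≤ w.re ∧ w.re ≤ 0}

theorem conj_mem_rayDirections (hw : w ∈ rayDirections C) : conj w ∈ rayDirections C := by
  simpa [rayDirections] using hw

theorem I_mem_rayDirections (hC : 1 ≤ C) : Complex.I ∈ rayDirections C := by
  refine ⟨by simp, ?_, le_rfl⟩
  rw [Complex.I_re, neg_nonpos]
  positivity

theorem slantedDirection_mem_rayDirections (hC : 1 ≤ C) :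
    slantedDirection C ∈ rayDirections C := by
  refine ⟨abs_one, le_rfl, ?_⟩
  rw [slantedDirection, neg_nonpos]
  positivity

theorem mem_rayDirections_of_mem_pair (hw : w ∈ rayDirections C)
    (hq : q ∈ ({w, conj w} : Set ℂ)) : q ∈ rayDirections C := by
  rcases hq with rfl | rfl
  exacts [hw, conj_mem_rayDirections hw]

theorem norm_slantedDirection_le (hC : 1 ≤ C) : ‖slantedDirection C‖ ≤ 5 / 4 := by
  have hinv : (4 * C)⁻¹ ≤ 1 / 4 := by
    rw [inv_le_comm₀ (by positivity) (by positivity)]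
    linarith
  have hinv0 : 0 ≤ (4 * C)⁻¹ := by positivity
  refine (Complex.norm_le_abs_re_add_abs_im _).trans ?_
  rw [slantedDirection, abs_neg, abs_of_nonneg hinv0, abs_one]
  linarith

theorem abs_im_ray (hw : w ∈ rayDirections C) (hr : 0 ≤ r) : |(ε + r * w : ℂ).im| = r := by
  simp [abs_mul, hw.1, abs_of_nonneg hr]

theorem re_ray_le (hw : w ∈ rayDirections C) (hr : 0 ≤ r) : (ε + r * w : ℂ).re ≤ ε := by
  simpa using mul_nonpos_of_nonneg_of_nonpos hr hw.2.2

theorem le_re_ray_add (hw : w ∈ rayDirections C) (hr : 0 ≤ r) :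
    ε ≤ (ε + r * w : ℂ).re + |(ε + r * w : ℂ).im| / (4 * C) := by
  rw [abs_im_ray hw hr, div_eq_mul_inv]
  have := mul_le_mul_of_nonneg_left hw.2.1 hr
  simp only [Complex.add_re, Complex.ofReal_re, Complex.re_ofReal_mul]
  linarith

theorem re_mul_le_of_mem_slantedRays
    (hq : q ∈ ({slantedDirection C, conj (slantedDirection C)} : Set ℂ)) (z : ℂ) :
    (q * z).re ≤ -(z.re / (4 * C) - |z.im|) := by
  rcases hq with rfl | rfl
  · simp only [slantedDirection, Complex.mul_re]
    linarith [neg_le_abs z.im, div_eq_inv_mul z.re (4 * C)]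
  · simp only [slantedDirection, Complex.mul_re, Complex.conj_re, Complex.conj_im]
    linarith [le_abs_self z.im, div_eq_inv_mul z.re (4 * C)]

theorem decayRate_pos (hC : 1 ≤ C) (hz : 4 * C * |z.im| < z.re) :
    0 < z.re / (4 * C) - |z.im| := by
  rwa [sub_pos, lt_div_iff₀' (by positivity)]

theorem norm_exp_slantedRay_le
    (hq : q ∈ ({slantedDirection C, conj (slantedDirection C)} : Set ℂ)) (hr : 0 ≤ r) (z : ℂ) :
    ‖Complex.exp ((ε + r * q) * z)‖ ≤
      Real.exp (ε * z.re) * Real.exp (-(z.re / (4 * C) - |z.im|) * r) := by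
  rw [Complex.norm_exp, ← Real.exp_add, Real.exp_le_exp, add_mul, mul_assoc, Complex.add_re,
    Complex.re_ofReal_mul, Complex.re_ofReal_mul, mul_comm _ r]
  gcongr
  exact re_mul_le_of_mem_slantedRays hq z

theorem mem_rayDirections_of_mem_segment (hv : v ∈ rayDirections C) (hw : w ∈ rayDirections C)
    (him : v.im = w.im) (hq : q ∈ segment ℝ v w) : q ∈ rayDirections C ∧ q.im = v.im := by
  obtain ⟨a, b, ha, hb, hab, rfl⟩ := hq
  have hqim : (a • v + b • w).im = v.im := by
    simp only [Complex.add_im, Complex.smul_im, smul_eq_mul, ← him]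
    rw [← add_mul, hab, one_mul]
  refine ⟨⟨by rw [hqim, hv.1], ?_⟩, hqim⟩
  simpa using convex_Icc (-(4 * C)⁻¹) 0 hv.2 hw.2 ha hb hab

/-- The half-plane `0 < 2C Re l + σ Im l`, for `σ = ±1` a convex part of `extendedSector C` that
contains the rays with a direction in `rayDirections C` of imaginary part `σ`. -/
def extendedHalfPlane (C σ : ℝ) : Set ℂ := {l | 0 < 2 * C * l.re + σ * l.im}

theorem isOpen_extendedHalfPlane (C σ : ℝ) : IsOpen (extendedHalfPlane C σ) :=
  isOpen_lt (by fun_prop) (by fun_prop)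

theorem convex_extendedHalfPlane (C σ : ℝ) : Convex ℝ (extendedHalfPlane C σ) := by
  refine convex_halfSpace_gt ⟨fun l m ↦ ?_, fun c l ↦ ?_⟩ 0
  · simp only [Complex.add_re, Complex.add_im]
    ring
  · simp only [Complex.smul_re, Complex.smul_im, smul_eq_mul]
    ring

theorem extendedHalfPlane_subset {σ : ℝ} (hσ : |σ| = 1) :
    extendedHalfPlane C σ ⊆ extendedSector C := fun l hl ↦ by
  have hle := le_abs_self (σ * l.im)
  rw [abs_mul, hσ, one_mul] at hle
  have hl : 0 < 2 * C * l.re + σ * l.im := hl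
  change -(2 * C * l.re) < |l.im|
  linarith

theorem mem_extendedHalfPlane_ray (hC : 1 ≤ C) (hε : 0 < ε) (hw : w ∈ rayDirections C)
    (hr : 0 ≤ r) : (ε + r * w : ℂ) ∈ extendedHalfPlane C w.im := by
  have hle := le_re_ray_add (ε := ε) hw hr
  rw [abs_im_ray hw hr, ← sub_le_iff_le_add, sub_le_iff_le_add', ← sub_le_iff_le_add,
    le_div_iff₀ (by positivity)] at hle
  have hsq : w.im * w.im = 1 := by rw [← abs_mul_abs_self, hw.1, one_mul]
  have hεC : 0 < ε * C := by positivity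
  have him : w.im * (ε + r * w : ℂ).im = r := by
    simp only [Complex.add_im, Complex.ofReal_im, Complex.im_ofReal_mul, zero_add]
    rw [mul_left_comm, hsq, mul_one]
  change 0 < 2 * C * (ε + r * w : ℂ).re + w.im * (ε + r * w : ℂ).im
  rw [him]
  linarith

theorem mem_extendedSector_ray (hC : 1 ≤ C) (hε : 0 < ε) (hw : w ∈ rayDirections C) (hr : 0 ≤ r) :
    (ε + r * w : ℂ) ∈ extendedSector C :=
  extendedHalfPlane_subset hw.1 (mem_extendedHalfPlane_ray hC hε hw hr)

end Contour

section ContourRepresentation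

open MeasureTheory Set
open scoped ComplexConjugate

variable {X : Type u} [NormedAddCommGroup X] [NormedSpace ℂ X] {dom : Set X} {A : X → X}
  {T : ℝ → X →L[ℂ] X} {C M ε t r : ℝ} {G : ℂ → X →L[ℂ] X}
  {l q v w z : ℂ}

namespace IsSectorialResolvent

variable (hG : IsSectorialResolvent dom A C M G) (hC : 1 ≤ C) (hM : 1 ≤ M) (hε : 0 < ε)
include hG hC hε

theorem continuousAt_ray (hw : w ∈ rayDirections C) (hr : 0 ≤ r) :
    ContinuousAt G (ε + r * w) :=
  (hG.hasDerivAt (mem_extendedSector_ray hC hε hw hr)).continuousAt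

include hM

theorem norm_ray_le (hw : w ∈ rayDirections C) (hr : 0 ≤ r) :
    ‖G (ε + r * w)‖ ≤ 2 * M / ε :=
  (le_div_iff₀ hε).mpr (hG.norm_mul_le_of_le_re_add hC hM hε (le_re_ray_add hw hr)).1

theorem norm_sq_le (hl : ε ≤ l.re + |l.im| / (4 * C)) :
    ‖G l * G l‖ ≤ ((2 * M / ε) ^ 2 + (2 * C * M) ^ 2) * (1 + l.im ^ 2)⁻¹ := by
  obtain ⟨hconst, hdecay⟩ := hG.norm_mul_le_of_le_re_add hC hM hε hl
  rw [← le_div_iff₀ hε] at hconst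
  refine (norm_mul_le _ _).trans ((le_mul_inv_iff₀ (by positivity)).mpr ?_)
  calc ‖G l‖ * ‖G l‖ * (1 + l.im ^ 2) = ‖G l‖ ^ 2 + (‖G l‖ * |l.im|) ^ 2 := by
        rw [mul_pow, sq_abs]
        ring
    _ ≤ (2 * M / ε) ^ 2 + (2 * C * M) ^ 2 := by gcongr

theorem integrable_sq_verticalLine :
    Integrable fun s : ℝ ↦ G (ε + s * Complex.I) * G (ε + s * Complex.I) := by
  have hcont : Continuous fun s : ℝ ↦ G (ε + s * Complex.I) :=
    continuous_iff_continuousAt.mpr fun s ↦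
      ContinuousAt.comp (f := fun s : ℝ ↦ (ε + s * Complex.I : ℂ))
      (hG.hasDerivAt (mem_extendedSector_of_re_pos hC (by simpa using hε))).continuousAt
      (by fun_prop)
  refine (integrable_inv_one_add_sq.const_mul ((2 * M / ε) ^ 2 + (2 * C * M) ^ 2)).mono'
    (hcont.mul hcont).aestronglyMeasurable (Eventually.of_forall fun s ↦ ?_)
  have hle : ε ≤ (ε + s * Complex.I : ℂ).re + |(ε + s * Complex.I : ℂ).im| / (4 * C) := by
    simp only [Complex.add_re, Complex.ofReal_re, Complex.re_ofReal_mul, Complex.I_re, mul_zero,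
      add_zero, le_add_iff_nonneg_right]
    positivity
  simpa using hG.norm_sq_le hC hM hε hle

theorem norm_exp_smul_neg_sq_ray_le (ht : 0 < t) (hw : w ∈ rayDirections C) (hr : 0 ≤ r) :
    ‖Complex.exp ((ε + r * w) * t) • -(G (ε + r * w) * G (ε + r * w))‖ ≤
      Real.exp (ε * t) * ((2 * M / ε) ^ 2 + (2 * C * M) ^ 2) * (1 + r ^ 2)⁻¹ := by
  rw [norm_smul, norm_neg, mul_assoc, Complex.norm_exp, Complex.re_mul_ofReal]
  gcongr
  · exact re_ray_le hw hr
  · simpa only [← sq_abs (Complex.im _), abs_im_ray hw hr] using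
      hG.norm_sq_le hC hM hε (le_re_ray_add hw hr)

theorem integrableOn_exp_smul_neg_sq_ray (ht : 0 < t) (hw : w ∈ rayDirections C) :
    IntegrableOn (fun r : ℝ ↦ w • Complex.exp ((ε + r * w) * t) •
      -(G (ε + r * w) * G (ε + r * w))) (Ioi 0) := by
  refine integrableOn_ray (F := fun l ↦ Complex.exp (l * t) • -(G l * G l)) (fun r hr ↦ ?_)
    (integrable_inv_one_add_sq.const_mul _).integrableOn
    (fun r hr ↦ hG.norm_exp_smul_neg_sq_ray_le hC hM hε ht hw hr.le)
  have hcont := hG.continuousAt_ray hC hε hw hr.le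
  exact ContinuousAt.smul (f := fun l : ℂ ↦ Complex.exp (l * t)) (by fun_prop) (hcont.mul hcont).neg

theorem rayIntegral_exp_smul_neg_sq_eq [CompleteSpace X] (ht : 0 < t) (hv : v ∈ rayDirections C)
    (hw : w ∈ rayDirections C) (him : v.im = w.im) :
    rayIntegral (fun l ↦ Complex.exp (l * t) • -(G l * G l)) ε v =
      rayIntegral (fun l ↦ Complex.exp (l * t) • -(G l * G l)) ε w := by
  have hseg {q : ℂ} := mem_rayDirections_of_mem_segment (q := q) hv hw him
  refine rayIntegral_eq_of_segment (isOpen_extendedHalfPlane C v.im)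
    (convex_extendedHalfPlane C v.im) (fun l hl ↦ ?_) (fun q hq r hr ↦ ?_)
    (fun q hq r hr ↦ hG.norm_exp_smul_neg_sq_ray_le hC hM hε ht (hseg hq).1 hr.le)
  · have hdiff := (hG.hasDerivAt (extendedHalfPlane_subset hv.1 hl)).differentiableAt
    have hexp : DifferentiableAt ℂ (fun l : ℂ ↦ Complex.exp (l * t)) l := by fun_prop
    exact (hexp.smul (hdiff.mul hdiff).neg).differentiableWithinAt
  · rw [← (hseg hq).2]
    exact mem_extendedHalfPlane_ray hC hε (hseg hq).1 hr

theorem bromwichIntegral_exp_smul_neg_sq_I [CompleteSpace X] (hT : IsC0Semigroup T)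
    (hTM : ∀ t, 0 ≤ t → ‖T t‖ ≤ M) (hA : IsGenerator T dom A) (ht : 0 < t) :
    bromwichIntegral (fun l ↦ Complex.exp (l * t) • -(G l * G l)) ε Complex.I =
      -((t : ℂ) • T t) := by
  ext x
  have hint : Integrable fun s : ℝ ↦ (-(G (ε + s * Complex.I) * G (ε + s * Complex.I))) x :=
    ((ContinuousLinearMap.apply ℂ X x).integrable_comp
      (hG.integrable_sq_verticalLine hC hM hε)).neg
  have hinv := bromwichIntegral_exp_smul_deriv_laplaceTransform
    (L' := fun l ↦ (-(G l * G l)) x) ((hT.continuousOn_apply hTM x).mono Ioi_subset_Ici_self)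
    (norm_apply_le_mul_norm hTM x) hε
    (fun s ↦ hG.hasDerivAt_laplaceTransform hT hTM hA hC (by simpa using hε) x)
    hint ht
  have happly := bromwichIntegral_apply (p := ε) (w := Complex.I)
    (F := fun l ↦ Complex.exp (l * t) • -(G l * G l))
    (fun q hq ↦ hG.integrableOn_exp_smul_neg_sq_ray hC hM hε ht
      (mem_rayDirections_of_mem_pair (I_mem_rayDirections hC) hq)) x
  rw [happly, neg_apply, smul_apply, Complex.coe_smul, ← hinv]
  rfl

theorem bromwichIntegral_exp_smul_neg_sq_slantedDirection [CompleteSpace X] (hT : IsC0Semigroup T)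
    (hTM : ∀ t, 0 ≤ t → ‖T t‖ ≤ M) (hA : IsGenerator T dom A) (ht : 0 < t) :
    bromwichIntegral (fun l ↦ Complex.exp (l * t) • -(G l * G l)) ε (slantedDirection C) =
      -((t : ℂ) • T t) := by
  have hI := I_mem_rayDirections hC
  have hw := slantedDirection_mem_rayDirections hC
  rw [← hG.bromwichIntegral_exp_smul_neg_sq_I hC hM hε hT hTM hA ht, bromwichIntegral,
    bromwichIntegral, hG.rayIntegral_exp_smul_neg_sq_eq hC hM hε ht hI hw rfl,
    hG.rayIntegral_exp_smul_neg_sq_eq hC hM hε ht (conj_mem_rayDirections hI)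
      (conj_mem_rayDirections hw) rfl]

theorem norm_exp_smul_slantedRay_le
    (hq : q ∈ ({slantedDirection C, conj (slantedDirection C)} : Set ℂ)) (hr : 0 ≤ r) (z : ℂ) :
    ‖Complex.exp ((ε + r * q) * z) • G (ε + r * q)‖ ≤
      Real.exp (ε * z.re) * (2 * M / ε) * Real.exp (-(z.re / (4 * C) - |z.im|) * r) := by
  have hqC := mem_rayDirections_of_mem_pair (slantedDirection_mem_rayDirections hC) hq
  rw [mul_right_comm]
  exact norm_smul_le_of_le (norm_exp_slantedRay_le hq hr z) (hG.norm_ray_le hC hM hε hqC hr)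

theorem integrableOn_exp_smul_slantedRay
    (hq : q ∈ ({slantedDirection C, conj (slantedDirection C)} : Set ℂ))
    (hz : 4 * C * |z.im| < z.re) :
    IntegrableOn (fun r : ℝ ↦ q • Complex.exp ((ε + r * q) * z) • G (ε + r * q)) (Ioi 0) := by
  have hqC := mem_rayDirections_of_mem_pair (slantedDirection_mem_rayDirections hC) hq
  exact integrableOn_exp_smul_ray (decayRate_pos hC hz)
    (fun r hr ↦ hG.continuousAt_ray hC hε hqC hr.le)
    (fun r hr ↦ hG.norm_ray_le hC hM hε hqC hr.le) (fun r hr ↦ norm_exp_slantedRay_le hq hr.le z)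

theorem tendsto_exp_smul_slantedRay
    (hq : q ∈ ({slantedDirection C, conj (slantedDirection C)} : Set ℂ))
    (hz : 4 * C * |z.im| < z.re) :
    Tendsto (fun r : ℝ ↦ Complex.exp ((ε + r * q) * z) • G (ε + r * q)) atTop (𝓝 0) := by
  refine squeeze_zero_norm' ((eventually_ge_atTop 0).mono fun r hr ↦
    hG.norm_exp_smul_slantedRay_le hC hM hε hq hr z) ?_
  have hexp : Tendsto (fun r : ℝ ↦ Real.exp (-(z.re / (4 * C) - |z.im|) * r)) atTop (𝓝 0) :=
    Real.tendsto_exp_atBot.comp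
      (tendsto_id.const_mul_atTop_of_neg (neg_neg_of_pos (decayRate_pos hC hz)))
  simpa using hexp.const_mul (Real.exp (ε * z.re) * (2 * M / ε))

theorem eq_bromwichIntegral [CompleteSpace X] (hT : IsC0Semigroup T)
    (hTM : ∀ t, 0 ≤ t → ‖T t‖ ≤ M) (hA : IsGenerator T dom A) (ht : 0 < t) :
    T t = bromwichIntegral (fun l ↦ Complex.exp (l * t) • G l) ε (slantedDirection C) := by
  have hmem {q : ℂ} :=
    mem_rayDirections_of_mem_pair (q := q) (slantedDirection_mem_rayDirections hC)
  have hsector : 4 * C * |(t : ℂ).im| < (t : ℂ).re := by simpa using ht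
  have hparts := bromwichIntegral_exp_smul_of_hasDerivAt (p := ε) (w := slantedDirection C)
    (F' := fun l ↦ -(G l * G l)) (t := t)
    (fun q hq r hr ↦ hG.hasDerivAt (mem_extendedSector_ray hC hε (hmem hq) hr))
    (fun q hq ↦ hG.integrableOn_exp_smul_slantedRay hC hM hε hq hsector)
    (fun q hq ↦ hG.integrableOn_exp_smul_neg_sq_ray hC hM hε ht (hmem hq))
    (fun q hq ↦ hG.tendsto_exp_smul_slantedRay hC hM hε hq hsector)
  rw [hG.bromwichIntegral_exp_smul_neg_sq_slantedDirection hC hM hε hT hTM hA ht, neg_inj] at hparts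
  exact smul_right_injective _ (Complex.ofReal_ne_zero.mpr ht.ne') hparts

end IsSectorialResolvent

end ContourRepresentation

section ContourSector

variable {C : ℝ} {v z : ℂ}

/-- The sector `|arg z| < arctan (1/(4C))`, on which `exp (l * z)` decays as `l` goes to infinity
along the ray in direction `slantedDirection C` or its conjugate. -/
def contourSector (C : ℝ) : Set ℂ := {z | 4 * C * |z.im| < z.re}

theorem isOpen_contourSector (C : ℝ) : IsOpen (contourSector C) :=
  isOpen_lt (by fun_prop) Complex.continuous_re

theorem ofReal_mem_contourSector (C : ℝ) {t : ℝ} (ht : 0 < t) : (t : ℂ) ∈ contourSector C := by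
  simpa [contourSector] using ht

theorem smul_mem_contourSector {a : ℝ} (ha : 0 < a) (hz : z ∈ contourSector C) :
    a • z ∈ contourSector C := by
  change 4 * C * |(a • z).im| < (a • z).re
  simp only [Complex.smul_im, Complex.smul_re, smul_eq_mul, abs_mul, abs_of_pos ha]
  linarith [mul_lt_mul_of_pos_left hz ha, mul_left_comm a (4 * C) |z.im|]

theorem add_mem_contourSector (hC : 1 ≤ C) (hv : v ∈ contourSector C)
    (hz : z ∈ contourSector C) : v + z ∈ contourSector C := by
  have hadd := mul_le_mul_of_nonneg_left (abs_add_le v.im z.im) (by positivity : 0 ≤ 4 * C)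
  have hv : 4 * C * |v.im| < v.re := hv
  have hz : 4 * C * |z.im| < z.re := hz
  change 4 * C * |v.im + z.im| < v.re + z.re
  linarith

theorem isPreconnected_contourSector (hC : 1 ≤ C) : IsPreconnected (contourSector C) :=
  (convex_iff_forall_pos.mpr fun _ hv _ hz _ _ ha hb _ ↦ add_mem_contourSector hC
    (smul_mem_contourSector ha hv) (smul_mem_contourSector hb hz)).isPreconnected

theorem mem_contourSector_of_mul_abs_im_le (hre : 0 < z.re)
    (him : 8 * C * |z.im| ≤ z.re) : z ∈ contourSector C := by
  change 4 * C * |z.im| < z.re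
  linarith

theorem ne_zero_of_mem_contourSector (hz : z ∈ contourSector C) : z ≠ 0 := by
  rintro rfl
  simp [contourSector] at hz

theorem re_pos_and_mul_abs_im_le_of_abs_arg_le (hC : 1 ≤ C) (hz : z ≠ 0)
    (harg : |z.arg| ≤ 1 / (16 * C)) : 0 < z.re ∧ 8 * C * |z.im| ≤ z.re := by
  have hC16 : 1 / (16 * C) ≤ 1 := by
    rw [div_le_one (by positivity)]
    linarith
  have hcos : 1 / 2 ≤ Real.cos z.arg := by
    refine le_trans ?_ Real.one_sub_sq_div_two_le_cos
    linarith [(sq_le_one_iff_abs_le_one z.arg).mpr (harg.trans hC16)]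
  have hre : ‖z‖ / 2 ≤ z.re := by
    rw [← Complex.norm_mul_cos_arg, div_eq_mul_one_div]
    gcongr
  have him : |z.im| ≤ ‖z‖ * (1 / (16 * C)) := by
    rw [← Complex.norm_mul_sin_arg, abs_mul, abs_norm]
    gcongr
    exact Real.abs_sin_le_abs.trans harg
  refine ⟨(half_pos (norm_pos_iff.mpr hz)).trans_le hre, ?_⟩
  calc 8 * C * |z.im| ≤ 8 * C * (‖z‖ * (1 / (16 * C))) := by gcongr
    _ = ‖z‖ / 2 := by
        field_simp
        norm_num
    _ ≤ z.re := hre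

end ContourSector

section IdentityTheorem

open Set

variable {E : Type*} [NormedAddCommGroup E] [NormedSpace ℂ E] {U s : Set ℂ}

theorem eqOn_of_eq_ofReal [CompleteSpace E] {f g : ℂ → E} (hUo : IsOpen U) (hU : IsPreconnected U)
    (hUpos : ∀ t : ℝ, 0 < t → (t : ℂ) ∈ U) (hf : DifferentiableOn ℂ f U)
    (hg : DifferentiableOn ℂ g U) (hfg : ∀ t : ℝ, 0 < t → f t = g t) : EqOn f g U := by
  refine (hf.analyticOnNhd hUo).eqOn_of_preconnected_of_frequently_eq (hg.analyticOnNhd hUo) hU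
    (hUpos 1 one_pos) ?_
  have hto : Tendsto (fun t : ℝ ↦ (t : ℂ)) (𝓝[>] 1) (𝓝[≠] ((1 : ℝ) : ℂ)) :=
    tendsto_nhdsWithin_iff.mpr
      ⟨(Complex.continuous_ofReal.tendsto 1).mono_left nhdsWithin_le_nhds,
        eventually_nhdsWithin_of_forall fun t ht ↦ Complex.ofReal_injective.ne (ne_of_gt ht)⟩
  have heq : ∀ᶠ t : ℝ in 𝓝[>] 1, f t = g t :=
    eventually_nhdsWithin_of_forall fun t ht ↦ hfg t (one_pos.trans ht)
  exact hto.frequently heq.frequently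

theorem map_add_of_eq_ofReal [CompleteSpace E] {T : ℝ → E →L[ℂ] E} {S : ℂ → E →L[ℂ] E}
    (hUo : IsOpen U) (hU : IsPreconnected U) (hUpos : ∀ t : ℝ, 0 < t → (t : ℂ) ∈ U)
    (hUadd : ∀ v ∈ U, ∀ z ∈ U, v + z ∈ U) (hS : DifferentiableOn ℂ S U)
    (hST : ∀ t : ℝ, 0 < t → S t = T t)
    (hT : ∀ s t : ℝ, 0 < s → 0 < t → T (s + t) = (T s).comp (T t)) {v z : ℂ} (hv : v ∈ U)
    (hz : z ∈ U) : S (v + z) = (S v).comp (S z) := by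
  have hreal (t : ℝ) (ht : 0 < t) : EqOn (fun v ↦ S (v + t)) (fun v ↦ (S v).comp (T t)) U := by
    refine eqOn_of_eq_ofReal hUo hU hUpos
      (hS.comp (by fun_prop) fun v hv ↦ hUadd v hv t (hUpos t ht))
      (hS.clm_comp (differentiableOn_const _)) fun s hs ↦ ?_
    rw [← Complex.ofReal_add, hST _ (add_pos hs ht), hST s hs, hT s t hs ht]
  refine eqOn_of_eq_ofReal (f := fun z ↦ S (v + z)) hUo hU hUpos
    (hS.comp (by fun_prop) fun z hz ↦ hUadd v hv z hz)
    ((differentiableOn_const _).clm_comp hS) (fun t ht ↦ ?_) hz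
  rw [hST t ht]
  exact hreal t ht hv

theorem tendsto_apply_nhdsWithin_zero {T : ℝ → E →L[ℂ] E} {S : ℂ → E →L[ℂ] E} {K : ℝ} {x : E}
    (hT : Tendsto (fun t ↦ T t x) (𝓝[>] 0) (𝓝 x)) (hS : ∀ t : ℝ, 0 < t → ContinuousAt S t)
    (hST : ∀ t : ℝ, 0 < t → S t = T t)
    (hadd : ∀ z ∈ s, ∀ t : ℝ, 0 < t → S (z + t) = (S z).comp (S t)) (hK : ∀ z ∈ s, ‖S z‖ ≤ K) :
    Tendsto (fun z ↦ S z x) (𝓝[s] 0) (𝓝 x) := by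
  have hequi : Equicontinuous fun (z : s) (y : E) ↦ S z y :=
    ((NormedSpace.equicontinuous_TFAE fun z : s ↦ S z).out 1 5 rfl rfl).mpr
      ⟨K, fun z ↦ hK z z.2⟩
  have hsub {y : E} : Tendsto (fun z ↦ S z y) (𝓝[s] 0) (𝓝 y) ↔
      Tendsto (fun z : s ↦ S z y) (comap (↑) (𝓝 (0 : ℂ))) (𝓝 y) := by
    rw [nhdsWithin, ← map_comap_setCoe_val, tendsto_map'_iff]
    rfl
  have hmem (t : ℝ) (ht : 0 < t) : Tendsto (fun z ↦ S z (T t x)) (𝓝[s] 0) (𝓝 (T t x)) := by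
    have hcont : ContinuousAt (fun z : ℂ ↦ S (z + t) x) 0 :=
      (ContinuousAt.comp (f := fun z : ℂ ↦ z + (t : ℂ)) (by simpa using hS t ht)
        (by fun_prop)).clm_apply continuousAt_const
    have hlim := hcont.tendsto.mono_left (nhdsWithin_le_nhds (s := s))
    rw [zero_add, hST t ht] at hlim
    refine hlim.congr' (eventually_nhdsWithin_of_forall fun z hz ↦ ?_)
    rw [hadd z hz t ht, hST t ht, ContinuousLinearMap.comp_apply]
  exact hsub.mpr <| (hequi.isClosed_setOfPred_tendsto continuous_id).mem_of_tendsto hT <|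
    eventually_nhdsWithin_of_forall fun t ht ↦ hsub.mp (hmem t ht)

end IdentityTheorem

section HolomorphicExtension

open Set
open scoped ComplexConjugate

variable {X : Type u} [NormedAddCommGroup X] [NormedSpace ℂ X] {dom : Set X} {A : X → X}
  {T : ℝ → X →L[ℂ] X} {C M ε : ℝ} {G : ℂ → X →L[ℂ] X} {q z : ℂ}

/-- The inverse Laplace transform of the resolvent family `G` along the contour through `ε` with
the directions `slantedDirection C` and its conjugate; it continues the semigroup to
`contourSector C`. -/
noncomputable def holomorphicExtension (G : ℂ → X →L[ℂ] X) (C ε : ℝ) (z : ℂ) : X →L[ℂ] X :=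
  bromwichIntegral (fun l ↦ Complex.exp (l * z) • G l) ε (slantedDirection C)

theorem exists_nhds_norm_exp_slantedRay_le (hC : 1 ≤ C) (hε : 0 < ε) (hz : z ∈ contourSector C) :
    ∃ s ∈ 𝓝 z, ∃ K δ : ℝ, 0 < δ ∧
      ∀ q ∈ ({slantedDirection C, conj (slantedDirection C)} : Set ℂ), ∀ ζ ∈ s, ∀ r : ℝ, 0 < r →
        ‖Complex.exp ((ε + r * q) * ζ)‖ ≤ K * Real.exp (-δ * r) := by
  have hδ := decayRate_pos hC hz
  set δ := z.re / (4 * C) - |z.im|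
  have hre : ∀ᶠ ζ : ℂ in 𝓝 z, ζ.re < z.re + 1 :=
    Complex.continuous_re.continuousAt.eventually_lt_const (lt_add_one _)
  have hrate : ∀ᶠ ζ : ℂ in 𝓝 z, δ / 2 < ζ.re / (4 * C) - |ζ.im| :=
    Tendsto.eventually_const_lt (half_lt_self hδ) (Continuous.tendsto (by fun_prop) z)
  refine ⟨_, hre.and hrate, Real.exp (ε * (z.re + 1)), δ / 2, half_pos hδ,
    fun q hq ζ hζ r hr ↦ (norm_exp_slantedRay_le hq hr.le ζ).trans ?_⟩
  gcongr
  exacts [hζ.1.le, hζ.2.le]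

namespace IsSectorialResolvent

variable (hG : IsSectorialResolvent dom A C M G) (hC : 1 ≤ C) (hM : 1 ≤ M)
include hG hC hM

theorem norm_smul_slantedRay_le (hε : 0 < ε)
    (hq : q ∈ ({slantedDirection C, conj (slantedDirection C)} : Set ℂ)) {r : ℝ} (hr : 0 ≤ r) :
    ‖(ε + r * q : ℂ) • G (ε + r * q)‖ ≤ 2 * M + 5 / 4 * (2 * C * M) := by
  have hqC := mem_rayDirections_of_mem_pair (slantedDirection_mem_rayDirections hC) hq
  have hqnorm : ‖q‖ ≤ 5 / 4 := by
    rcases hq with rfl | rfl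
    exacts [norm_slantedDirection_le hC,
      (Complex.norm_conj _).trans_le (norm_slantedDirection_le hC)]
  obtain ⟨hGε, hGr⟩ := hG.norm_mul_le_of_le_re_add hC hM hε (le_re_ray_add hqC hr)
  rw [abs_im_ray hqC hr] at hGr
  have hpoint : ‖(ε + r * q : ℂ)‖ ≤ ε + r * ‖q‖ := by
    simpa [abs_of_pos hε, abs_of_nonneg hr] using norm_add_le (ε : ℂ) (r * q)
  calc ‖(ε + r * q : ℂ) • G (ε + r * q)‖ ≤ (ε + r * ‖q‖) * ‖G (ε + r * q)‖ := by
        rw [norm_smul]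
        gcongr
    _ = ‖G (ε + r * q)‖ * ε + ‖q‖ * (‖G (ε + r * q)‖ * r) := by ring
    _ ≤ 2 * M + 5 / 4 * (2 * C * M) := by gcongr

theorem differentiableOn_holomorphicExtension (hε : 0 < ε) :
    DifferentiableOn ℂ (holomorphicExtension G C ε) (contourSector C) := fun z hz ↦ by
  obtain ⟨s, hs, K, δ, hδ, hexp⟩ := exists_nhds_norm_exp_slantedRay_le hC hε hz
  have hray (q : ℂ) (hq : q ∈ ({slantedDirection C, conj (slantedDirection C)} : Set ℂ)) :
      DifferentiableAt ℂ (fun ζ ↦ rayIntegral (fun l ↦ Complex.exp (l * ζ) • G l) ε q) z := by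
    have hqC := mem_rayDirections_of_mem_pair (slantedDirection_mem_rayDirections hC) hq
    exact differentiableAt_rayIntegral_exp_smul hδ hs
      (fun r hr ↦ hG.continuousAt_ray hC hε hqC hr.le)
      (fun r hr ↦ hG.norm_ray_le hC hM hε hqC hr.le)
      (fun r hr ↦ hG.norm_smul_slantedRay_le hC hM hε hq hr.le) (hexp q hq)
  have hsub := (hray _ (.inl rfl)).sub (hray _ (.inr rfl))
  exact (hsub.const_smul (2 * Real.pi * Complex.I : ℂ)⁻¹).differentiableWithinAt

theorem norm_holomorphicExtension_inv_re_le (hre : 0 < z.re) (him : 8 * C * |z.im| ≤ z.re) :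
    ‖holomorphicExtension G C z.re⁻¹ z‖ ≤ 20 * C * M := by
  have hrate : z.re / (8 * C) ≤ z.re / (4 * C) - |z.im| := by
    have him' : |z.im| ≤ z.re / (8 * C) := (le_div_iff₀' (by positivity)).mpr him
    have hhalf : z.re / (4 * C) = z.re / (8 * C) + z.re / (8 * C) := by
      field_simp
      norm_num
    linarith
  have hle : ‖holomorphicExtension G C z.re⁻¹ z‖ ≤ ‖slantedDirection C‖ *
      (Real.exp 1 * (2 * M * z.re) / (z.re / (8 * C))) / Real.pi := by
    refine norm_bromwichIntegral_le (by positivity) fun q hq r hr ↦ ?_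
    refine (hG.norm_exp_smul_slantedRay_le hC hM (inv_pos.mpr hre) hq hr.le z).trans ?_
    rw [inv_mul_cancel₀ hre.ne', div_inv_eq_mul]
    gcongr
  calc ‖holomorphicExtension G C z.re⁻¹ z‖
      ≤ 5 / 4 * (3 * (2 * M * z.re) / (z.re / (8 * C))) / 3 := by
        refine hle.trans ?_
        gcongr
        exacts [norm_slantedDirection_le hC, Real.exp_one_lt_three.le, Real.pi_gt_three.le]
    _ = 20 * C * M := by
        field_simp
        norm_num

variable [CompleteSpace X] (hT : IsC0Semigroup T) (hTM : ∀ t, 0 ≤ t → ‖T t‖ ≤ M)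
  (hA : IsGenerator T dom A)
include hT hTM hA

theorem holomorphicExtension_ofReal (hε : 0 < ε) {t : ℝ} (ht : 0 < t) :
    holomorphicExtension G C ε t = T t :=
  (hG.eq_bromwichIntegral hC hM hε hT hTM hA ht).symm

theorem eqOn_holomorphicExtension {η : ℝ} (hε : 0 < ε) (hη : 0 < η) :
    EqOn (holomorphicExtension G C ε) (holomorphicExtension G C η) (contourSector C) :=
  eqOn_of_eq_ofReal (isOpen_contourSector C) (isPreconnected_contourSector hC)
    (fun _ ↦ ofReal_mem_contourSector C) (hG.differentiableOn_holomorphicExtension hC hM hε)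
    (hG.differentiableOn_holomorphicExtension hC hM hη) fun _ ht ↦
      (hG.holomorphicExtension_ofReal hC hM hT hTM hA hε ht).trans
        (hG.holomorphicExtension_ofReal hC hM hT hTM hA hη ht).symm

theorem holomorphicExtension_add (hε : 0 < ε) {v z : ℂ} (hv : v ∈ contourSector C)
    (hz : z ∈ contourSector C) : holomorphicExtension G C ε (v + z) =
      (holomorphicExtension G C ε v).comp (holomorphicExtension G C ε z) :=
  map_add_of_eq_ofReal (isOpen_contourSector C) (isPreconnected_contourSector hC)
    (fun _ ↦ ofReal_mem_contourSector C) (fun _ hv _ hz ↦ add_mem_contourSector hC hv hz)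
    (hG.differentiableOn_holomorphicExtension hC hM hε)
    (fun _ ↦ hG.holomorphicExtension_ofReal hC hM hT hTM hA hε)
    (fun s t hs ht ↦ hT.2.1 s t hs.le ht.le) hv hz

-- Shifting the contour to pass through `1 / Re z` makes the bound independent of `z`.
theorem norm_holomorphicExtension_le (hε : 0 < ε) (hre : 0 < z.re)
    (him : 8 * C * |z.im| ≤ z.re) : ‖holomorphicExtension G C ε z‖ ≤ 20 * C * M := by
  rw [hG.eqOn_holomorphicExtension hC hM hT hTM hA hε (inv_pos.mpr hre)
    (mem_contourSector_of_mul_abs_im_le hre him)]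
  exact hG.norm_holomorphicExtension_inv_re_le hC hM hre him

theorem tendsto_holomorphicExtension_apply (hε : 0 < ε) (x : X) :
    Tendsto (fun z ↦ holomorphicExtension G C ε z x)
      (𝓝[{z | 0 < z.re ∧ 8 * C * |z.im| ≤ z.re}] 0) (𝓝 x) :=
  tendsto_apply_nhdsWithin_zero (hT.2.2 x)
    (fun _ ht ↦ (hG.differentiableOn_holomorphicExtension hC hM hε).continuousOn.continuousAt
      ((isOpen_contourSector C).mem_nhds (ofReal_mem_contourSector C ht)))
    (fun _ ↦ hG.holomorphicExtension_ofReal hC hM hT hTM hA hε)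
    (fun _ hz _ ht ↦ hG.holomorphicExtension_add hC hM hT hTM hA hε
      (mem_contourSector_of_mul_abs_im_le hz.1 hz.2) (ofReal_mem_contourSector C ht))
    (fun _ hz ↦ hG.norm_holomorphicExtension_le hC hM hT hTM hA hε hz.1 hz.2)

end IsSectorialResolvent

end HolomorphicExtension

section BoundedHolomorphicExtension

variable {X : Type u} [NormedAddCommGroup X] [NormedSpace ℂ X] {T : ℝ → X →L[ℂ] X}
  {S : ℂ → X →L[ℂ] X} {θ θ' K K' : ℝ}

/-- `S` extends `T` to a semigroup on the sector `|arg z| ≤ θ` that is bounded by `K` there,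
holomorphic in the interior, and strongly continuous at `0`. -/
structure IsBoundedHolomorphicExtension (T : ℝ → X →L[ℂ] X) (θ K : ℝ) (S : ℂ → X →L[ℂ] X) :
    Prop where
  apply_ofReal : ∀ t : ℝ, 0 ≤ t → S t = T t
  map_add : ∀ z₁ z₂ : ℂ, z₁ ≠ 0 → z₂ ≠ 0 → |z₁.arg| ≤ θ → |z₂.arg| ≤ θ →
    S (z₁ + z₂) = (S z₁).comp (S z₂)
  differentiableOn : DifferentiableOn ℂ S {z | z ≠ 0 ∧ |z.arg| < θ}
  tendsto_apply : ∀ x, Tendsto (fun z ↦ S z x) (𝓝[{z | z ≠ 0 ∧ |z.arg| ≤ θ}] 0) (𝓝 x)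
  norm_le : ∀ z : ℂ, z ≠ 0 → |z.arg| ≤ θ → ‖S z‖ ≤ K

theorem IsBoundedHolomorphicExtension.mono (hS : IsBoundedHolomorphicExtension T θ K S)
    (hθ : θ' ≤ θ) (hK : K ≤ K') : IsBoundedHolomorphicExtension T θ' K' S where
  apply_ofReal := hS.apply_ofReal
  map_add z₁ z₂ hz₁ hz₂ h₁ h₂ := hS.map_add z₁ z₂ hz₁ hz₂ (h₁.trans hθ) (h₂.trans hθ)
  differentiableOn := hS.differentiableOn.mono fun _ hz ↦ ⟨hz.1, hz.2.trans_le hθ⟩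
  tendsto_apply x := (hS.tendsto_apply x).mono_left <|
    nhdsWithin_mono 0 fun _ hz ↦ ⟨hz.1, hz.2.trans hθ⟩
  norm_le z hz h := (hS.norm_le z hz (h.trans hθ)).trans hK

theorem IsSectorialResolvent.isBoundedHolomorphicExtension [CompleteSpace X] {dom : Set X}
    {A : X → X} {C M : ℝ} {G : ℂ → X →L[ℂ] X} (hG : IsSectorialResolvent dom A C M G)
    (hC : 1 ≤ C) (hM : 1 ≤ M) (hT : IsC0Semigroup T) (hTM : ∀ t, 0 ≤ t → ‖T t‖ ≤ M)
    (hA : IsGenerator T dom A) :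
    IsBoundedHolomorphicExtension T (1 / (16 * C)) (20 * C * M)
      (Function.update (holomorphicExtension G C 1) 0 1) := by
  have hmem {z : ℂ} (hz : z ≠ 0) (harg : |z.arg| ≤ 1 / (16 * C)) : z ∈ contourSector C :=
    (re_pos_and_mul_abs_im_le_of_abs_arg_le hC hz harg).elim mem_contourSector_of_mul_abs_im_le
  refine ⟨fun t ht ↦ ?_, fun v z hv hz hvarg hzarg ↦ ?_, ?_, fun x ↦ ?_, fun z hz harg ↦ ?_⟩
  · rcases ht.eq_or_lt with rfl | ht
    · simpa using hT.1.symm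
    · rw [Function.update_of_ne (Complex.ofReal_ne_zero.mpr ht.ne')]
      exact hG.holomorphicExtension_ofReal hC hM hT hTM hA one_pos ht
  · have hadd := add_mem_contourSector hC (hmem hv hvarg) (hmem hz hzarg)
    rw [Function.update_of_ne (ne_zero_of_mem_contourSector hadd), Function.update_of_ne hv,
      Function.update_of_ne hz]
    exact hG.holomorphicExtension_add hC hM hT hTM hA one_pos (hmem hv hvarg) (hmem hz hzarg)
  · exact ((hG.differentiableOn_holomorphicExtension hC hM one_pos).mono
      fun z hz ↦ hmem hz.1 hz.2.le).congr fun z hz ↦ Function.update_of_ne hz.1 _ _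
  · refine ((hG.tendsto_holomorphicExtension_apply hC hM hT hTM hA one_pos x).mono_left
      (nhdsWithin_mono 0 fun z hz ↦ re_pos_and_mul_abs_im_le_of_abs_arg_le hC hz.1 hz.2)).congr'
      (eventually_nhdsWithin_of_forall fun z hz ↦ ?_)
    simp only [Function.update_of_ne hz.1]
  · obtain ⟨hre, him⟩ := re_pos_and_mul_abs_im_le_of_abs_arg_le hC hz harg
    rw [Function.update_of_ne hz]
    exact hG.norm_holomorphicExtension_le hC hM hT hTM hA one_pos hre him

theorem stmt2_general [CompleteSpace X] {dom : Set X} {A : X → X} {C M : ℝ}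
    (hT : IsC0Semigroup T) (hM : 1 ≤ M) (hTM : ∀ t, 0 ≤ t → ‖T t‖ ≤ M)
    (hA : IsGenerator T dom A) (hC : 1 ≤ C)
    (hR : ∀ s : ℝ, s ≠ 0 → ∃ R, IsResolventAt dom A (s * Complex.I) R ∧ ‖R‖ ≤ C / |s|) :
    ∃ S, IsBoundedHolomorphicExtension T (1 / (16 * C)) (20 * C * M) S := by
  obtain ⟨G, hG⟩ := hT.exists_isSectorialResolvent hTM hA hC hR
  exact ⟨_, hG.isBoundedHolomorphicExtension hC hM hT hTM hA⟩

end BoundedHolomorphicExtension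

/-- Quantitative generation theorem for bounded holomorphic semigroups:
there are universal constants `c₁, c₂ > 0` such that whenever `A` generates a
`C₀`-semigroup with `‖T t‖ ≤ M` (`M ≥ 1`), `is ∈ ρ(A)` for `s ≠ 0` and
`‖R(is, A)‖ ≤ C/|s|` (`C ≥ 1`), the semigroup extends to a bounded holomorphic
semigroup `S` on the sector `|arg z| ≤ c₁/(C M)`, satisfying there
`‖S z‖ ≤ c₂ · C M · (1 + log (C M))`. -/
theorem stmt2 :
    ∃ c₁ c₂ : ℝ, 0 < c₁ ∧ 0 < c₂ ∧
      ∀ (X : Type u) [NormedAddCommGroup X] [NormedSpace ℂ X] [CompleteSpace X]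
        (T : ℝ → X →L[ℂ] X), IsC0Semigroup T →
      ∀ M : ℝ, 1 ≤ M → (∀ t : ℝ, 0 ≤ t → ‖T t‖ ≤ M) →
      ∀ (dom : Set X) (A : X → X), IsGenerator T dom A →
      ∀ C : ℝ, 1 ≤ C →
      (∀ s : ℝ, s ≠ 0 → ∃ R : X →L[ℂ] X,
        IsResolventAt dom A ((s : ℂ) * Complex.I) R ∧ ‖R‖ ≤ C / |s|) →
      ∃ S : ℂ → X →L[ℂ] X,
        (∀ t : ℝ, 0 ≤ t → S (t : ℂ) = T t) ∧
        (∀ z₁ z₂ : ℂ, z₁ ≠ 0 → z₂ ≠ 0 → |z₁.arg| ≤ c₁ / (C * M) → |z₂.arg| ≤ c₁ / (C * M) →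
          S (z₁ + z₂) = (S z₁).comp (S z₂)) ∧
        DifferentiableOn ℂ S {z : ℂ | z ≠ 0 ∧ |z.arg| < c₁ / (C * M)} ∧
        (∀ x : X, Tendsto (fun z => S z x)
          (nhdsWithin 0 {z : ℂ | z ≠ 0 ∧ |z.arg| ≤ c₁ / (C * M)}) (nhds x)) ∧
        ∀ z : ℂ, z ≠ 0 → |z.arg| ≤ c₁ / (C * M) →
          ‖S z‖ ≤ c₂ * (C * M) * (1 + Real.log (C * M)) := by
  refine ⟨1 / 16, 20, by norm_num, by norm_num,
    fun X _ _ _ T hT M hM hTM dom A hA C hC hR ↦ ?_⟩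
  obtain ⟨S, hS⟩ := stmt2_general hT hM hTM hA hC hR
  have hangle : 1 / 16 / (C * M) ≤ 1 / (16 * C) := by
    rw [div_div, ← mul_assoc]
    exact one_div_le_one_div_of_le (by positivity) (le_mul_of_one_le_right (by positivity) hM)
  have hbound : 20 * C * M ≤ 20 * (C * M) * (1 + Real.log (C * M)) := by
    rw [mul_assoc]
    exact le_mul_of_one_le_right (by positivity) <| le_add_of_nonneg_right <|
      Real.log_nonneg (one_le_mul_of_one_le_of_one_le hC hM)
  have hS' := hS.mono hangle hbound
  exact ⟨S, hS'.apply_ofReal, hS'.map_add, hS'.differentiableOn, hS'.tendsto_apply, hS'.norm_le⟩
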